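/- There exist universal constants c ∈ (0,1/4) and κ ∈ [2,∞) with the following properties. Let q ∈ [2,∞), n ∈ ℕ, and let (X,‖·‖_X) and (Y,‖·‖_Y) be Banach spaces with dim(X)=n and m_q(Y)<∞. Let |·| be any Hilbertian norm on X, identifying X with ℝ^n. Set K := κ·n^{1/4}·m_q(Y)·√(I_q(X)M(X)) and T := c/(n^{5/4}·√(I_q(X)M(X)·log n)). Then T ≤ 1/(2n), and for every 1-Lipschitz function f:B_X→Y and every r ∈ (0,T²]: (1/log(T/r)) ∫_r^T [ fint_{x ∈ (1−1/(2n))B_X} inf_{Λ ∈ A(X,Y), ‖Λ‖_{Lip(X,Y)}≤2} ρ^{−q} · fint_{x+ρB_X} ‖f(y)−Λ(y)‖_Y^q dy dx ] dρ/ρ ≤ (9Kn)^q / |log r|. -/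

import Mathlib

open MeasureTheory Metric Set ENNReal

noncomputable section

universe u

/-- `N` is a norm on the real vector space `V`. -/
def IsNorm {V : Type*} [AddCommGroup V] [Module ℝ V] (N : V → ℝ) : Prop :=
  (∀ x, N x = 0 → x = 0) ∧ (∀ (a : ℝ) (x : V), N (a • x) = |a| * N x) ∧
    (∀ x y : V, N (x + y) ≤ N x + N y)

/-- `m` is an upper bound for the martingale cotype `q` constant `𝔪_q(Y)` of `Y`. -/
def MartCotypeBound (q : ℝ) (Y : Type*) [NormedAddCommGroup Y] [NormedSpace ℝ Y]
    [CompleteSpace Y] (m : ℝ) : Prop :=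
  ∀ (Ω : Type) [MeasurableSpace Ω] (μ : Measure Ω) [IsProbabilityMeasure μ]
    (ℱ : Filtration ℕ ‹MeasurableSpace Ω›) (M : ℕ → Ω → Y), Martingale M ℱ μ →
    ∀ B : ℝ≥0∞, (∀ k, ∫⁻ ω, (‖M k ω‖₊ : ℝ≥0∞) ^ q ∂μ ≤ B) →
      ∑' k : ℕ, ∫⁻ ω, (‖M (k + 1) ω - M k ω‖₊ : ℝ≥0∞) ^ q ∂μ ≤ ENNReal.ofReal m ^ q * B

/-- The average of `N` over the Euclidean unit sphere (the quantity `M(X)`). -/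
def MX {n : ℕ} (N : EuclideanSpace ℝ (Fin n) → ℝ) : ℝ :=
  ⨍ σ : sphere (0 : EuclideanSpace ℝ (Fin n)) 1, N σ
    ∂((volume : Measure (EuclideanSpace ℝ (Fin n))).toSphere)

/-- The quantity `I_q(X) = (⨍_{B_X} |x|^q dx)^{1/q}`. -/
def IqX {n : ℕ} (q : ℝ) (N : EuclideanSpace ℝ (Fin n) → ℝ) : ℝ :=
  (⨍ x in {x : EuclideanSpace ℝ (Fin n) | N x ≤ 1}, ‖x‖ ^ q) ^ (1 / q)

/-- `log n`, interpreted as `1` when `n = 1`. -/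
def plog (n : ℕ) : ℝ := if n = 1 then 1 else Real.log n

namespace LVD

open scoped Pointwise

variable {n : ℕ} {N : EuclideanSpace ℝ (Fin n) → ℝ}

/-- The ball of radius `r` of `N`. -/
def nb (N : EuclideanSpace ℝ (Fin n) → ℝ) (r : ℝ) : Set (EuclideanSpace ℝ (Fin n)) :=
  {x | N x ≤ r}

lemma mem_nb {r : ℝ} {x : EuclideanSpace ℝ (Fin n)} : x ∈ nb N r ↔ N x ≤ r := Iff.rfl

lemma n_zero (hN : IsNorm N) : N 0 = 0 := by
  have := hN.2.1 0 0
  simpa using this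

lemma n_neg (hN : IsNorm N) (x) : N (-x) = N x := by
  have := hN.2.1 (-1) x
  simpa using this

lemma n_nonneg (hN : IsNorm N) (x) : 0 ≤ N x := by
  have h1 := hN.2.2 x (-x)
  rw [n_neg hN, add_neg_cancel, n_zero hN] at h1
  linarith

lemma n_pos (hN : IsNorm N) {x} (hx : x ≠ 0) : 0 < N x :=
  lt_of_le_of_ne (n_nonneg hN x) fun h => hx (hN.1 x h.symm)

lemma n_sub_comm (hN : IsNorm N) (x y) : N (x - y) = N (y - x) := by
  rw [← n_neg hN, neg_sub]

lemma n_smul (hN : IsNorm N) {a : ℝ} (ha : 0 ≤ a) (x) : N (a • x) = a * N x := by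
  rw [hN.2.1, abs_of_nonneg ha]

lemma n_sub_le (hN : IsNorm N) (x y) : N (x - y) ≤ N x + N y := by
  have := hN.2.2 x (-y)
  rwa [n_neg hN, ← sub_eq_add_neg] at this

lemma abs_n_sub (hN : IsNorm N) (x y) : |N x - N y| ≤ N (x - y) := by
  rw [abs_sub_le_iff]
  constructor
  · have := hN.2.2 (x - y) y
    rw [sub_add_cancel] at this; linarith
  · have := hN.2.2 (y - x) x
    rw [sub_add_cancel] at this
    rw [n_sub_comm hN]; linarith

lemma n_convex (hN : IsNorm N) : ConvexOn ℝ univ N := by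
  refine ⟨convex_univ, fun x _ y _ a b ha hb _ => ?_⟩
  have := hN.2.2 (a • x) (b • y)
  rwa [n_smul hN ha, n_smul hN hb] at this

lemma n_cont (hN : IsNorm N) : Continuous N := by
  rw [← continuousOn_univ]
  exact (n_convex hN).continuousOn isOpen_univ

lemma n_lower (hN : IsNorm N) : ∃ δ : ℝ, 0 < δ ∧ ∀ x, δ * ‖x‖ ≤ N x := by
  by_cases hne : (sphere (0 : EuclideanSpace ℝ (Fin n)) 1).Nonempty
  · obtain ⟨x0, hx0, hmin⟩ := (isCompact_sphere (0 : EuclideanSpace ℝ (Fin n)) 1).exists_isMinOn hne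
      (n_cont hN).continuousOn
    have hx0' : x0 ≠ 0 := by
      rintro rfl; simp at hx0
    refine ⟨N x0, n_pos hN hx0', fun x => ?_⟩
    by_cases hx : x = 0
    · simp [hx, n_zero hN]
    have hxn : 0 < ‖x‖ := norm_pos_iff.2 hx
    have h1 : ‖x‖⁻¹ • x ∈ sphere (0 : EuclideanSpace ℝ (Fin n)) 1 := by
      simp [norm_smul, hxn.ne']
    have h2 : N x0 ≤ N (‖x‖⁻¹ • x) := hmin h1
    rw [n_smul hN (by positivity)] at h2
    calc N x0 * ‖x‖ ≤ (‖x‖⁻¹ * N x) * ‖x‖ := by gcongr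
      _ = N x := by field_simp
  · refine ⟨1, one_pos, fun x => ?_⟩
    by_cases hx : x = 0
    · simp [hx, n_zero hN]
    · exfalso
      have hxn : 0 < ‖x‖ := norm_pos_iff.2 hx
      exact hne ⟨‖x‖⁻¹ • x, by simp [norm_smul, hxn.ne']⟩

lemma n_upper (hN : IsNorm N) : ∃ C : ℝ, 0 < C ∧ ∀ x, N x ≤ C * ‖x‖ := by
  obtain ⟨C, hC⟩ := (isCompact_sphere (0 : EuclideanSpace ℝ (Fin n)) 1).exists_bound_of_continuousOn
      (n_cont hN).continuousOn
  refine ⟨max C 1, by positivity, fun x => ?_⟩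
  by_cases hx : x = 0
  · simp [hx, n_zero hN]
  have hxn : 0 < ‖x‖ := norm_pos_iff.2 hx
  have h1 : ‖x‖⁻¹ • x ∈ sphere (0 : EuclideanSpace ℝ (Fin n)) 1 := by
    simp [norm_smul, hxn.ne']
  have h2 := hC _ h1
  rw [Real.norm_eq_abs, abs_of_nonneg (n_nonneg hN _), n_smul hN (by positivity)] at h2
  calc N x = (‖x‖⁻¹ * N x) * ‖x‖ := by field_simp
    _ ≤ max C 1 * ‖x‖ := by gcongr; exact h2.trans (le_max_left _ _)

lemma nb_closed (hN : IsNorm N) (r : ℝ) : IsClosed (nb N r) :=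
  isClosed_le (n_cont hN) continuous_const

lemma nb_meas (hN : IsNorm N) (r : ℝ) : MeasurableSet (nb N r) := (nb_closed hN r).measurableSet

lemma nb_compact (hN : IsNorm N) (r : ℝ) : IsCompact (nb N r) := by
  obtain ⟨δ, hδ, h⟩ := n_lower hN
  refine (isCompact_closedBall (0 : EuclideanSpace ℝ (Fin n)) (r / δ)).of_isClosed_subset
    (nb_closed hN r) fun x hx => ?_
  rw [mem_closedBall_zero_iff, le_div_iff₀ hδ, mul_comm]
  exact (h x).trans hx

lemma nb_fin (hN : IsNorm N) (r : ℝ) : volume (nb N r) ≠ ∞ := (nb_compact hN r).measure_ne_top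

lemma nb_pos (hN : IsNorm N) {r : ℝ} (hr : 0 < r) : volume (nb N r) ≠ 0 := by
  have : (interior (nb N r)).Nonempty := by
    refine ⟨0, mem_interior.2 ⟨{x | N x < r}, fun x hx => mem_nb.2 (le_of_lt hx),
      isOpen_lt (n_cont hN) continuous_const, ?_⟩⟩
    simpa [n_zero hN] using hr
  exact (Measure.measure_pos_of_nonempty_interior volume this).ne'

lemma nb_scale (hN : IsNorm N) {r : ℝ} (hr : 0 < r) :
    volume (nb N r) = ENNReal.ofReal (r ^ n) * volume (nb N 1) := by
  have : nb N r = r • nb N 1 := by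
    ext x
    rw [mem_smul_set_iff_inv_smul_mem₀ hr.ne', mem_nb, mem_nb, n_smul hN (by positivity),
      inv_mul_le_iff₀ hr, mul_one]
  rw [this, Measure.addHaar_smul, finrank_euclideanSpace_fin, abs_of_nonneg (by positivity)]

lemma nb_mono {r s : ℝ} (h : r ≤ s) : nb N r ⊆ nb N s := fun _ hx => le_trans hx h

/-- Volume comparison. -/
lemma nb_half (hn : 0 < n) (hN : IsNorm N) :
    volume (nb N 1) ≤ 2 * volume (nb N (1 - 1 / (2 * n))) := by
  have hn' : (1 : ℝ) ≤ n := by exact_mod_cast hn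
  have h0 : (1 : ℝ) / (2 * n) ≤ 1 / 2 := by
    apply one_div_le_one_div_of_le <;> linarith
  rw [nb_scale hN (r := 1 - 1 / (2 * n)) (by linarith), ← mul_assoc]
  have h1 : (1 : ℝ) / 2 ≤ (1 - 1 / (2 * n)) ^ n := by
    have := one_add_mul_le_pow (a := -(1 / (2 * (n : ℝ)))) (by linarith) n
    have e : (1 : ℝ) + n * (-(1 / (2 * (n : ℝ)))) = 1 / 2 := by field_simp; ring
    rw [e] at this
    rwa [sub_eq_add_neg]
  have h2 : (1 : ℝ≥0∞) ≤ 2 * ENNReal.ofReal ((1 - 1 / (2 * n)) ^ n) := by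
    have := ENNReal.ofReal_le_ofReal h1
    calc (1 : ℝ≥0∞) = 2 * ENNReal.ofReal (1 / 2) := by
          rw [← ENNReal.ofReal_ofNat 2, ← ENNReal.ofReal_mul (by norm_num)]; norm_num
      _ ≤ _ := by gcongr
  calc volume (nb N 1) = 1 * volume (nb N 1) := (one_mul _).symm
    _ ≤ _ := by gcongr

end LVD

namespace LVD

open scoped Pointwise

variable {n : ℕ} {N : EuclideanSpace ℝ (Fin n) → ℝ}

lemma MX_pos (hn : 0 < n) (hN : IsNorm N) : 0 < MX N := by
  have : Nonempty (Fin n) := ⟨⟨0, hn⟩⟩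
  have hc : Continuous fun σ : sphere (0 : EuclideanSpace ℝ (Fin n)) 1 => N σ :=
    (n_cont hN).comp continuous_subtype_val
  have hi : Integrable (fun σ : sphere (0 : EuclideanSpace ℝ (Fin n)) 1 => N σ)
      ((volume : Measure (EuclideanSpace ℝ (Fin n))).toSphere) :=
    hc.integrable_of_hasCompactSupport (HasCompactSupport.of_compactSpace _)
  have hne : ((volume : Measure (EuclideanSpace ℝ (Fin n))).toSphere) ≠ 0 :=
    Measure.toSphere_ne_zero _
  unfold MX
  rw [average_eq, smul_eq_mul]
  refine mul_pos (inv_pos.2 ?_) ?_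
  · rw [measureReal_def]
    exact ENNReal.toReal_pos (mt Measure.measure_univ_eq_zero.1 hne) (measure_ne_top _ _)
  · have hpos : ∀ σ : sphere (0 : EuclideanSpace ℝ (Fin n)) 1, 0 < N σ := fun σ =>
      n_pos hN (ne_zero_of_mem_unit_sphere σ)
    rw [integral_pos_iff_support_of_nonneg (fun σ => (hpos σ).le) hi]
    have : Function.support (fun σ : sphere (0 : EuclideanSpace ℝ (Fin n)) 1 => N σ) = univ := by
      ext σ; simp [(hpos σ).ne']
    rw [this]
    exact pos_iff_ne_zero.2 (mt Measure.measure_univ_eq_zero.1 hne)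

lemma vol_lower (hn : 0 < n) (hN : IsNorm N) :
    (1 / (2 * MX N)) ^ n * ((1 / 2) * volume.real (ball (0 : EuclideanSpace ℝ (Fin n)) 1))
      ≤ volume.real (nb N 1) := by
  have : Nonempty (Fin n) := ⟨⟨0, hn⟩⟩
  have hM := MX_pos hn hN
  set μ := (volume : Measure (EuclideanSpace ℝ (Fin n))).toSphere with hμ
  have hc : Continuous fun σ : sphere (0 : EuclideanSpace ℝ (Fin n)) 1 => N σ :=
    (n_cont hN).comp continuous_subtype_val
  have hi : Integrable (fun σ : sphere (0 : EuclideanSpace ℝ (Fin n)) 1 => N σ) μ :=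
    hc.integrable_of_hasCompactSupport (HasCompactSupport.of_compactSpace _)
  have hne : μ ≠ 0 := Measure.toSphere_ne_zero _
  have hu : 0 < μ.real univ := by
    rw [measureReal_def]
    exact ENNReal.toReal_pos (mt Measure.measure_univ_eq_zero.1 hne) (measure_ne_top _ _)
  have hintg : ∫ σ, N σ ∂μ = MX N * μ.real univ := by
    unfold MX
    rw [average_eq, smul_eq_mul, ← hμ]
    field_simp
  have h1 := mul_meas_ge_le_integral_of_nonneg (μ := μ)
    (Filter.Eventually.of_forall fun σ => n_nonneg hN σ) hi (2 * MX N)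
  rw [hintg] at h1
  have hS : MeasurableSet {σ : sphere (0 : EuclideanSpace ℝ (Fin n)) 1 | N σ < 2 * MX N} :=
    (isOpen_lt hc continuous_const).measurableSet
  have h2 : μ.real {σ : sphere (0 : EuclideanSpace ℝ (Fin n)) 1 | 2 * MX N ≤ N σ}
      ≤ 1 / 2 * μ.real univ := by
    have : MX N * (2 * μ.real {σ : sphere (0 : EuclideanSpace ℝ (Fin n)) 1 | 2 * MX N ≤ N σ})
        ≤ MX N * μ.real univ := by linarith
    have := le_of_mul_le_mul_left this hM
    linarith
  have h3 := measureReal_add_measureReal_compl (μ := μ) hS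
  have h4 : {σ : sphere (0 : EuclideanSpace ℝ (Fin n)) 1 | N σ < 2 * MX N}ᶜ
      = {σ : sphere (0 : EuclideanSpace ℝ (Fin n)) 1 | 2 * MX N ≤ N σ} := by
    ext σ; simp
  rw [h4] at h3
  set S := {σ : sphere (0 : EuclideanSpace ℝ (Fin n)) 1 | N σ < 2 * MX N} with hSdef
  have h5 : 1 / 2 * μ.real univ ≤ μ.real S := by linarith
  have h6 : μ.real univ = n * volume.real (ball (0 : EuclideanSpace ℝ (Fin n)) 1) := by
    rw [hμ, Measure.toSphere_real_apply_univ, finrank_euclideanSpace_fin]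
  have h7 : μ.real S = n * volume.real (Ioo (0 : ℝ) 1 • ((↑) '' S : Set (EuclideanSpace ℝ (Fin n)))) := by
    rw [measureReal_def, hμ, Measure.toSphere_apply' _ hS, finrank_euclideanSpace_fin]
    simp [measureReal_def]
  have hn' : (0 : ℝ) < n := by exact_mod_cast hn
  have h8 : 1 / 2 * volume.real (ball (0 : EuclideanSpace ℝ (Fin n)) 1)
      ≤ volume.real (Ioo (0 : ℝ) 1 • ((↑) '' S : Set (EuclideanSpace ℝ (Fin n)))) := by
    rw [h6, h7] at h5
    refine le_of_mul_le_mul_left ?_ hn'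
    linarith
  have hR : 0 < 1 / (2 * MX N) := by positivity
  have h9 : (1 / (2 * MX N)) • (Ioo (0 : ℝ) 1 • ((↑) '' S : Set (EuclideanSpace ℝ (Fin n)))) ⊆ nb N 1 := by
    rintro _ ⟨_, ⟨t, ht, _, ⟨σ, hσ, rfl⟩, rfl⟩, rfl⟩
    simp only [mem_nb]
    rw [n_smul hN hR.le, n_smul hN ht.1.le, one_div, inv_mul_le_iff₀ (by positivity)]
    have : N σ < 2 * MX N := hσ
    have h0 := n_nonneg hN σ
    have := ht.2
    nlinarith [ht.1]
  calc (1 / (2 * MX N)) ^ n * ((1 / 2) * volume.real (ball (0 : EuclideanSpace ℝ (Fin n)) 1))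
      ≤ (1 / (2 * MX N)) ^ n * volume.real (Ioo (0 : ℝ) 1 • ((↑) '' S : Set (EuclideanSpace ℝ (Fin n)))) := by
        gcongr
    _ = volume.real ((1 / (2 * MX N)) • (Ioo (0 : ℝ) 1 • ((↑) '' S : Set (EuclideanSpace ℝ (Fin n))))) := by
        rw [Measure.real, Measure.real, Measure.addHaar_smul, finrank_euclideanSpace_fin, ENNReal.toReal_mul,
          abs_of_nonneg (by positivity), ENNReal.toReal_ofReal (by positivity)]
    _ ≤ _ := measureReal_mono h9 (nb_fin hN 1)

lemma Iq_M_lower (hn : 0 < n) (hN : IsNorm N) {q : ℝ} (hq : 2 ≤ q) :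
    1 / 16 ≤ IqX q N * MX N := by
  have : Nonempty (Fin n) := ⟨⟨0, hn⟩⟩
  have hM := MX_pos hn hN
  have hn' : (0 : ℝ) < n := by exact_mod_cast hn
  set R : ℝ := 1 / (2 * MX N) with hRd
  have hR : 0 < R := by positivity
  have hV := vol_lower hn hN
  rw [← hRd] at hV
  set v := volume.real (ball (0 : EuclideanSpace ℝ (Fin n)) 1) with hv
  have hv0 : 0 ≤ v := measureReal_nonneg
  set V := volume.real (nb N 1) with hVd
  have hV0 : 0 < V := by
    rw [hVd, measureReal_def]; exact ENNReal.toReal_pos (nb_pos hN one_pos) (nb_fin hN 1)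
  have hb : volume.real (ball (0 : EuclideanSpace ℝ (Fin n)) (R / 4)) = (R / 4) ^ n * v := by
    rw [hv, measureReal_def, measureReal_def,
      Measure.addHaar_ball _ _ (by positivity : 0 ≤ R / 4), finrank_euclideanSpace_fin,
      ENNReal.toReal_mul, ENNReal.toReal_ofReal (by positivity)]
  have hb2 : (R / 4) ^ n * v ≤ V / 2 := by
    have : (R / 4) ^ n ≤ R ^ n * (1 / 4) := by
      rw [div_eq_mul_inv, mul_pow]
      gcongr
      calc ((4 : ℝ)⁻¹) ^ n ≤ (4 : ℝ)⁻¹ ^ 1 := pow_le_pow_of_le_one (by norm_num) (by norm_num) hn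
        _ = 1 / 4 := by norm_num
    nlinarith [mul_le_mul_of_nonneg_right this hv0]
  set A := nb N 1 \ ball (0 : EuclideanSpace ℝ (Fin n)) (R / 4) with hA
  have hAm : MeasurableSet A := (nb_meas hN 1).diff measurableSet_ball
  have hA2 : V / 2 ≤ volume.real A := by
    have h1 : V ≤ volume.real A + volume.real (ball (0 : EuclideanSpace ℝ (Fin n)) (R / 4)) := by
      refine le_trans (measureReal_mono (s₂ := A ∪ ball (0 : EuclideanSpace ℝ (Fin n)) (R / 4)) ?_ ?_)
        (measureReal_union_le _ _)
      · intro x hx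
        by_cases h : x ∈ ball (0 : EuclideanSpace ℝ (Fin n)) (R / 4)
        · exact Or.inr h
        · exact Or.inl ⟨hx, h⟩
      · refine ((measure_union_le _ _).trans_lt (ENNReal.add_lt_top.2 ⟨?_, measure_ball_lt_top⟩)).ne
        exact (measure_mono sdiff_subset).trans_lt (nb_fin hN 1).lt_top
    rw [hb] at h1
    linarith
  have hcont : Continuous fun x : EuclideanSpace ℝ (Fin n) => ‖x‖ ^ q :=
    continuous_norm.rpow_const fun _ => Or.inr (by linarith)
  have hintg : IntegrableOn (fun x : EuclideanSpace ℝ (Fin n) => ‖x‖ ^ q) (nb N 1) :=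
    hcont.continuousOn.integrableOn_compact (nb_compact hN 1)
  have hI : (R / 4) ^ q * (V / 2) ≤ ∫ x in nb N 1, ‖x‖ ^ q := by
    calc (R / 4) ^ q * (V / 2) ≤ (R / 4) ^ q * volume.real A := by gcongr
      _ = ∫ x in A, (R / 4) ^ q := by simp [mul_comm]
      _ ≤ ∫ x in A, ‖x‖ ^ q := by
          refine setIntegral_mono_on ?_ (hintg.mono_set sdiff_subset) hAm ?_
          · refine integrableOn_const ?_
            exact ((measure_mono sdiff_subset).trans_lt (nb_fin hN 1).lt_top).ne
          · intro x hx
            have : R / 4 ≤ ‖x‖ := by simpa using hx.2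
            exact Real.rpow_le_rpow (by positivity) this (by linarith)
      _ ≤ _ := setIntegral_mono_set hintg
          (Filter.Eventually.of_forall fun x => by positivity)
          (Filter.Eventually.of_forall sdiff_subset)
  have hI2 : (R / 4) ^ q * (1 / 2) ≤ ⨍ x in nb N 1, ‖x‖ ^ q := by
    rw [setAverage_eq, smul_eq_mul, ← hVd, ← div_eq_inv_mul, le_div_iff₀ hV0]
    linarith
  have hI3 : R / 8 ≤ IqX q N := by
    unfold IqX
    have h1 : (R / 8) ^ q ≤ ⨍ x in nb N 1, ‖x‖ ^ q := by
      refine le_trans ?_ hI2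
      have : R / 8 = R / 4 * (1 / 2) := by ring
      rw [this, Real.mul_rpow (by positivity) (by positivity)]
      gcongr
      calc ((1 : ℝ) / 2) ^ q ≤ (1 / 2) ^ (1 : ℝ) :=
            Real.rpow_le_rpow_of_exponent_ge (by norm_num) (by norm_num) (by linarith)
        _ = 1 / 2 := by simp
    calc R / 8 = ((R / 8) ^ q) ^ (1 / q) := by
          rw [← Real.rpow_mul (by positivity), mul_one_div_cancel (by linarith), Real.rpow_one]
      _ ≤ _ := Real.rpow_le_rpow (by positivity) h1 (by positivity)
  calc (1 : ℝ) / 16 = R / 8 * MX N := by rw [hRd]; field_simp; norm_num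
    _ ≤ _ := by gcongr

end LVD

namespace LVD

section Mart

/-- the `i`-th bit -/
def bit {K : ℕ} (ω : Fin K → Bool) (i : ℕ) : Bool := if h : i < K then ω ⟨i, h⟩ else false

/-- left endpoint of the dyadic interval of level `k` -/
def lep {K : ℕ} (k : ℕ) (ω : Fin K → Bool) : ℝ :=
  ∑ i ∈ Finset.range k, if bit ω i then (1 / 2 : ℝ) ^ (i + 1) else 0

lemma lep_nonneg {K : ℕ} (k : ℕ) (ω : Fin K → Bool) : 0 ≤ lep k ω := by
  unfold lep
  refine Finset.sum_nonneg fun i _ => ?_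
  split_ifs <;> positivity

lemma lep_succ {K : ℕ} (k : ℕ) (ω : Fin K → Bool) :
    lep (k + 1) ω = lep k ω + if bit ω k then (1 / 2 : ℝ) ^ (k + 1) else 0 := by
  unfold lep
  rw [Finset.sum_range_succ]

lemma lep_le {K : ℕ} (k : ℕ) (ω : Fin K → Bool) : lep k ω + (1 / 2) ^ k ≤ 1 := by
  induction k with
  | zero => simp [lep]
  | succ k ih =>
    rw [lep_succ]
    have : (1 / 2 : ℝ) ^ k = 2 * (1 / 2) ^ (k + 1) := by rw [pow_succ]; ring
    have h0 : (0 : ℝ) < (1 / 2) ^ (k + 1) := by positivity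
    split_ifs <;> linarith

/-- truncation of bits -/
def trunc {K : ℕ} (k : ℕ) (ω : Fin K → Bool) : Fin K → Bool :=
  fun i => if i.val < k then ω i else false

lemma bit_trunc {K : ℕ} {k i : ℕ} (h : i < k) (ω : Fin K → Bool) :
    bit (trunc k ω) i = bit ω i := by
  unfold bit trunc
  simp [h]

lemma lep_trunc {K : ℕ} {k j : ℕ} (h : j ≤ k) (ω : Fin K → Bool) :
    lep j (trunc k ω) = lep j ω := by
  unfold lep
  refine Finset.sum_congr rfl fun i hi => ?_
  rw [bit_trunc (lt_of_lt_of_le (Finset.mem_range.1 hi) h)]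

lemma trunc_trunc {K : ℕ} {k j : ℕ} (h : j ≤ k) (ω : Fin K → Bool) :
    trunc j (trunc k ω) = trunc j ω := by
  funext i
  unfold trunc
  split_ifs with h1 h2
  · rfl
  · omega
  · rfl

/-- flipping one bit -/
def flip {K : ℕ} (k : Fin K) (ω : Fin K → Bool) : Fin K → Bool := Function.update ω k (!ω k)

lemma flip_invol {K : ℕ} (k : Fin K) : Function.Involutive (flip k) := by
  intro ω
  unfold flip
  simp

lemma trunc_flip {K : ℕ} (k : Fin K) (ω : Fin K → Bool) :
    trunc k (flip k ω) = trunc k ω := by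
  funext i
  unfold trunc flip
  split_ifs with h
  · rw [Function.update_of_ne]
    rintro rfl
    exact lt_irrefl _ h
  · rfl

lemma bit_flip {K : ℕ} (k : Fin K) (ω : Fin K → Bool) :
    bit (flip k ω) k = !bit ω k := by
  unfold bit flip
  simp

variable {Y : Type*} [NormedAddCommGroup Y] [NormedSpace ℝ Y]

/-- slopes -/
def slp (φ : ℝ → Y) {K : ℕ} (k : ℕ) (ω : Fin K → Bool) : Y :=
  (2 : ℝ) ^ k • (φ (lep k ω + (1 / 2) ^ k) - φ (lep k ω))

/-- second differences -/
def sdf (φ : ℝ → Y) {K : ℕ} (k : ℕ) (ω : Fin K → Bool) : Y :=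
  (2 : ℝ) ^ k • (φ (lep k ω + (1 / 2) ^ k) + φ (lep k ω) - (2 : ℝ) • φ (lep k ω + (1 / 2) ^ (k + 1)))

lemma slp_diff (φ : ℝ → Y) {K : ℕ} (k : ℕ) (ω : Fin K → Bool) :
    slp φ (k + 1) ω - slp φ k ω = (if bit ω k then (1 : ℝ) else -1) • sdf φ k ω := by
  unfold slp sdf
  rw [lep_succ]
  have e1 : (1 / 2 : ℝ) ^ (k + 1) + (1 / 2) ^ (k + 1) = (1 / 2) ^ k := by rw [pow_succ]; ring
  by_cases h : bit ω k
  · simp only [h, if_true]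
    rw [add_assoc, e1, pow_succ (2 : ℝ) k]
    module
  · simp only [h]
    simp only [Bool.false_eq_true, if_false, add_zero]
    rw [pow_succ (2 : ℝ) k]
    module

lemma slp_norm (φ : ℝ → Y) {L : ℝ}
    (hφ : ∀ s ∈ Icc (0 : ℝ) 1, ∀ t ∈ Icc (0 : ℝ) 1, ‖φ s - φ t‖ ≤ L * |s - t|)
    {K : ℕ} (k : ℕ) (ω : Fin K → Bool) : ‖slp φ k ω‖ ≤ L := by
  unfold slp
  have h0 := lep_nonneg k ω
  have h1 := lep_le k ω
  have h2 : (0 : ℝ) < (1 / 2) ^ k := by positivity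
  have := hφ _ ⟨by linarith, h1⟩ (lep k ω) ⟨h0, by linarith⟩
  rw [add_sub_cancel_left, abs_of_pos h2] at this
  rw [norm_smul, Real.norm_eq_abs, abs_of_pos (by positivity)]
  calc (2 : ℝ) ^ k * _ ≤ 2 ^ k * (L * (1 / 2) ^ k) := by gcongr
    _ = L * (2 * (1 / 2)) ^ k := by rw [mul_pow]; ring
    _ = L := by norm_num

lemma slp_trunc (φ : ℝ → Y) {K : ℕ} {k j : ℕ} (h : j ≤ k) (ω : Fin K → Bool) :
    slp φ j (trunc k ω) = slp φ j ω := by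
  unfold slp; rw [lep_trunc h]

lemma sdf_trunc (φ : ℝ → Y) {K : ℕ} {k j : ℕ} (h : j ≤ k) (ω : Fin K → Bool) :
    sdf φ j (trunc k ω) = sdf φ j ω := by
  unfold sdf; rw [lep_trunc h]

lemma diff_flip (φ : ℝ → Y) {K : ℕ} (k : Fin K) (ω : Fin K → Bool) :
    slp φ (k + 1) (flip k ω) - slp φ k (flip k ω) = -(slp φ (k + 1) ω - slp φ k ω) := by
  rw [slp_diff, slp_diff, bit_flip, ← sdf_trunc φ le_rfl (flip k ω), trunc_flip,
    sdf_trunc φ le_rfl]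
  cases bit ω k <;> simp

/-- The dyadic filtration on the discrete cube. -/
def dyF (K : ℕ) : @Filtration (Fin K → Bool) ℕ _ ⊤ :=
  letI : MeasurableSpace (Fin K → Bool) := ⊤
  { seq := fun k => MeasurableSpace.comap (trunc k) ⊤
    mono' := by
      intro i j hij
      dsimp only
      have : (trunc i : (Fin K → Bool) → _) = trunc i ∘ trunc j := by
        funext ω; exact (trunc_trunc hij ω).symm
      rw [this, ← MeasurableSpace.comap_comp]
      exact MeasurableSpace.comap_mono le_top
    le' := fun _ => le_top }

lemma mart_disc [CompleteSpace Y] {q m L : ℝ} (hq : 0 ≤ q) (hm : MartCotypeBound q Y m) (φ : ℝ → Y)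
    (hφ : ∀ s ∈ Icc (0 : ℝ) 1, ∀ t ∈ Icc (0 : ℝ) 1, ‖φ s - φ t‖ ≤ L * |s - t|) (K : ℕ) :
    ∑ k ∈ Finset.range K, (((2 : ℝ≥0∞) ^ K)⁻¹ * ∑ ω : Fin K → Bool, ‖sdf φ k ω‖ₑ ^ q)
      ≤ ENNReal.ofReal m ^ q * ENNReal.ofReal L ^ q := by
  letI : MeasurableSpace (Fin K → Bool) := ⊤
  let μ : Measure (Fin K → Bool) := ((2 : ℝ≥0∞) ^ K)⁻¹ • Measure.count
  have h2 : ((2 : ℝ≥0∞) ^ K) ≠ 0 := by positivity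
  have h2' : ((2 : ℝ≥0∞) ^ K) ≠ ∞ := by finiteness
  have hμ : IsProbabilityMeasure μ := by
    constructor
    simp only [μ, Measure.smul_apply, Measure.count_univ, smul_eq_mul]
    simp
    exact ENNReal.inv_mul_cancel h2 h2'
  have hl : ∀ g : (Fin K → Bool) → ℝ≥0∞, ∫⁻ ω, g ω ∂μ = ((2 : ℝ≥0∞) ^ K)⁻¹ * ∑ ω, g ω := by
    intro g
    simp only [μ]
    rw [lintegral_smul_measure, lintegral_count, tsum_fintype, smul_eq_mul]
  let M : ℕ → (Fin K → Bool) → Y := fun k ω => slp φ (min k K) ω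
  have hintg : ∀ g : (Fin K → Bool) → Y, Integrable g μ := fun g => Integrable.of_finite
  have hM : Martingale M (dyF K) μ := by
    refine martingale_nat ?_ (fun i => hintg _) ?_
    · intro k
      have : M k = M k ∘ trunc k := by
        funext ω
        exact (slp_trunc φ (min_le_left _ _) ω).symm
      rw [this]
      exact (StronglyMeasurable.of_discrete (f := M k)).comp_measurable
        (comap_measurable (trunc k))
    · intro k
      refine ae_eq_condExp_of_forall_setIntegral_eq ((dyF K).le k) (hintg _)
        (fun s _ _ => (hintg _).integrableOn) ?_ ?_
      · intro s hs _
        by_cases hk : k < K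
        · have hs0 : MeasurableSet s := trivial
          rw [← sub_eq_zero, ← integral_sub (hintg _).integrableOn (hintg _).integrableOn,
            ← integral_indicator hs0]
          set h := s.indicator fun ω => M k ω - M (k + 1) ω with hh
          have hT : ∀ ω, h (flip ⟨k, hk⟩ ω) = - h ω := by
            intro ω
            obtain ⟨t, -, rfl⟩ := hs
            have hmem : flip ⟨k, hk⟩ ω ∈ trunc k ⁻¹' t ↔ ω ∈ trunc k ⁻¹' t := by
              have := trunc_flip ⟨k, hk⟩ ω
              simp only at this
              simp only [mem_preimage, this]
            have hd := diff_flip φ ⟨k, hk⟩ ω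
            simp only at hd
            by_cases hw : ω ∈ trunc k ⁻¹' t
            · rw [hh, indicator_of_mem (hmem.2 hw), indicator_of_mem hw]
              simp only [M, min_eq_left hk.le, min_eq_left (Nat.succ_le_of_lt hk)]
              rw [← neg_sub, hd, neg_neg, neg_sub]
            · rw [hh, indicator_of_notMem (mt hmem.1 hw), indicator_of_notMem hw, neg_zero]
          have : ∫ ω, h ω ∂μ = - ∫ ω, h ω ∂μ := by
            simp only [μ]
            rw [integral_smul_measure, integral_countable, tsum_fintype]
            · simp only [Measure.real, Measure.count_singleton, toReal_one, one_smul]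
              conv_lhs => rw [← Equiv.sum_comp (flip_invol ⟨k, hk⟩).toPerm]
              simp [hT]
            · exact Integrable.of_finite
          have h3 : (2 : ℝ) • ∫ ω, h ω ∂μ = 0 := by
            rw [two_smul]; nth_rewrite 2 [this]; exact add_neg_cancel _
          exact (smul_eq_zero.1 h3).resolve_left two_ne_zero
        · have : M (k + 1) = M k := by
            simp only [M]
            rw [min_eq_right (by omega), min_eq_right (by omega)]
          rw [this]
      · have : M k = M k ∘ trunc k := by
          funext ω
          exact (slp_trunc φ (min_le_left _ _) ω).symm
        rw [this]
        exact ((StronglyMeasurable.of_discrete (f := M k)).comp_measurable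
          (comap_measurable (trunc k))).aestronglyMeasurable
  have key := hm _ μ (dyF K) M hM (ENNReal.ofReal L ^ q) (by
    intro k
    calc ∫⁻ ω, (‖M k ω‖₊ : ℝ≥0∞) ^ q ∂μ ≤ ∫⁻ ω, ENNReal.ofReal L ^ q ∂μ := by
          refine lintegral_mono fun ω => ?_
          refine ENNReal.rpow_le_rpow ?_ hq
          rw [← enorm_eq_nnnorm, ← ofReal_norm]
          exact ENNReal.ofReal_le_ofReal (slp_norm φ hφ _ ω)
      _ = _ := by simp)
  refine le_trans ?_ key
  refine le_trans (Finset.sum_le_sum ?_) (ENNReal.sum_le_tsum (Finset.range K))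
  intro k hk
  have hk := Finset.mem_range.1 hk
  rw [hl]
  refine mul_le_mul_right (Finset.sum_le_sum fun ω _ => le_of_eq ?_) _
  simp only [M, min_eq_left hk.le, min_eq_left (Nat.succ_le_of_lt hk)]
  rw [slp_diff, ← enorm_eq_nnnorm, enorm_smul]
  congr 1
  split_ifs <;> simp

end Mart

end LVD

namespace LVD

variable {n : ℕ} {N : EuclideanSpace ℝ (Fin n) → ℝ}
variable {Y : Type*} [NormedAddCommGroup Y] [NormedSpace ℝ Y]

/-- second difference -/
def D2 (F : EuclideanSpace ℝ (Fin n) → Y) (v z : EuclideanSpace ℝ (Fin n)) : Y :=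
  F (z + v) + F (z - v) - (2 : ℝ) • F z

lemma D2_cont {F : EuclideanSpace ℝ (Fin n) → Y} (hF : Continuous F) :
    Continuous fun p : EuclideanSpace ℝ (Fin n) × EuclideanSpace ℝ (Fin n) => D2 F p.1 p.2 := by
  unfold D2; fun_prop

lemma one_le_m [CompleteSpace Y] [Nontrivial Y] {q m : ℝ} (hq : 2 ≤ q)
    (hm : MartCotypeBound q Y m) : 1 ≤ m := by
  obtain ⟨y, hy⟩ := exists_ne (0 : Y)
  have := mart_disc (L := ‖y‖) (by linarith : 0 ≤ q) hm (fun t => |t - 1 / 2| • y) (by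
    intro s _ t _
    rw [← sub_smul, norm_smul, mul_comm]
    gcongr
    rw [Real.norm_eq_abs]
    refine (abs_abs_sub_abs_le _ _).trans (le_of_eq ?_)
    congr 1; ring) 1
  simp only [sdf, lep, Finset.range_one, Finset.sum_singleton, Finset.range_zero, Finset.sum_empty,
    pow_zero, one_smul, zero_add] at this
  norm_num at this
  have e : ((1 / 2 : ℝ) • y + (1 / 2 : ℝ) • y) = y := by module
  rw [e, ← mul_assoc, ENNReal.inv_mul_cancel (by norm_num) (by norm_num), one_mul,
    ← ENNReal.mul_rpow_of_nonneg _ _ (by linarith), ENNReal.rpow_le_rpow_iff (by linarith)] at this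
  by_contra hlt
  push Not at hlt
  have hy' : ‖y‖ₑ ≠ 0 := by simpa using hy
  have h1 : ENNReal.ofReal m < 1 := by
    rw [← ENNReal.ofReal_one]; exact (ENNReal.ofReal_lt_ofReal_iff one_pos).2 hlt
  have h2 : ENNReal.ofReal m * ‖y‖ₑ < 1 * ‖y‖ₑ := by
    gcongr
    exact enorm_ne_top
  rw [one_mul] at h2
  exact absurd this (not_le.2 h2)

lemma shift_le {A B : Set (EuclideanSpace ℝ (Fin n))} (hA : MeasurableSet A) (hB : MeasurableSet B)
    (w : EuclideanSpace ℝ (Fin n)) (h : ∀ z ∈ A, z - w ∈ B)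
    (g : EuclideanSpace ℝ (Fin n) → ℝ≥0∞) :
    ∫⁻ z in A, g z ≤ ∫⁻ x in B, g (x + w) := by
  rw [← lintegral_indicator hA, ← lintegral_indicator hB,
    ← lintegral_add_right_eq_self (A.indicator g) w]
  refine lintegral_mono fun x => ?_
  by_cases hx : x + w ∈ A
  · have := h _ hx
    rw [add_sub_cancel_right] at this
    rw [indicator_of_mem hx, indicator_of_mem this]
  · rw [indicator_of_notMem hx]; exact zero_le

lemma sum_Q [CompleteSpace Y] (hn : 0 < n) (hN : IsNorm N) {q m : ℝ} (hq : 2 ≤ q)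
    (hm : MartCotypeBound q Y m) {F : EuclideanSpace ℝ (Fin n) → Y} (hF : Continuous F)
    (hL : ∀ x, N x ≤ 1 → ∀ y, N y ≤ 1 → ‖F x - F y‖ ≤ N (x - y))
    (v : EuclideanSpace ℝ (Fin n)) (hv : N v ≤ 1 / (16 * n)) :
    ∑' k : ℕ, ((2 : ℝ≥0∞) ^ k) ^ q *
      ∫⁻ z in nb N (1 - 1 / (4 * n)), ‖D2 F ((1 / 2 : ℝ) ^ k • v) z‖ₑ ^ q
      ≤ ENNReal.ofReal m ^ q * ENNReal.ofReal (2 * N v) ^ q * volume (nb N 1) := by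
  have hq0 : 0 ≤ q := by linarith
  have hn' : (0 : ℝ) < n := by exact_mod_cast hn
  have hv4 : 4 * N v ≤ 1 / (4 * n) := by
    calc 4 * N v ≤ 4 * (1 / (16 * n)) := by gcongr
      _ = 1 / (4 * n) := by field_simp; norm_num
  have hv0 := n_nonneg hN v
  set D := nb N (1 - 1 / (4 * n)) with hD
  set D' := nb N (1 - 1 / (4 * n) + 2 * N v) with hD'
  rw [ENNReal.tsum_eq_iSup_nat]
  refine iSup_le fun K => ?_
  -- pointwise martingale estimate
  have hpt : ∀ x ∈ D', ∑ k ∈ Finset.range K, (((2 : ℝ≥0∞) ^ K)⁻¹ *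
      ∑ ω : Fin K → Bool, ((2 : ℝ≥0∞) ^ k) ^ q *
        ‖D2 F ((1 / 2 : ℝ) ^ k • v) (x + (2 * (lep k ω + (1 / 2) ^ (k + 1))) • v)‖ₑ ^ q)
      ≤ ENNReal.ofReal m ^ q * ENNReal.ofReal (2 * N v) ^ q := by
    intro x hx
    have hmem : ∀ t ∈ Icc (0 : ℝ) 1, N (x + (2 * t) • v) ≤ 1 := by
      intro t ht
      have h1 := hN.2.2 x ((2 * t) • v)
      rw [n_smul hN (by linarith [ht.1])] at h1
      have h2 : N x ≤ _ := hx
      have h3 : 2 * t * N v ≤ 2 * 1 * N v := by gcongr; exact ht.2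
      linarith
    have := mart_disc (L := 2 * N v) hq0 hm (fun t => F (x + (2 * t) • v)) (by
      intro s hs t ht
      refine (hL _ (hmem s hs) _ (hmem t ht)).trans (le_of_eq ?_)
      rw [add_sub_add_left_eq_sub, ← sub_smul, ← mul_sub, hN.2.1, abs_mul, abs_of_pos two_pos]
      ring) K
    refine le_trans (le_of_eq ?_) this
    refine Finset.sum_congr rfl fun k _ => ?_
    congr 1
    refine Finset.sum_congr rfl fun ω _ => ?_
    rw [← ENNReal.mul_rpow_of_nonneg _ _ hq0]
    congr 1
    unfold sdf D2
    rw [enorm_smul]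
    congr 1
    · rw [← ofReal_norm, norm_pow, Real.norm_two, ENNReal.ofReal_pow (by norm_num)]
      simp
    · congr 4
      · rw [pow_succ]; module
      · rw [pow_succ]; module
  have hintg := lintegral_mono_ae (μ := volume.restrict D')
    ((ae_restrict_iff' (nb_meas hN _)).2 (Filter.Eventually.of_forall hpt))
  rw [lintegral_const, Measure.restrict_apply_univ] at hintg
  have hDle : volume D' ≤ volume (nb N 1) := by
    refine measure_mono (nb_mono ?_)
    linarith
  refine le_trans ?_ (hintg.trans (mul_le_mul_right hDle _))
  have hmeas : ∀ (k : ℕ) (c : ℝ), Measurable fun x =>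
      ‖D2 F ((1 / 2 : ℝ) ^ k • v) (x + c • v)‖ₑ ^ q := by
    intro k c
    have : Continuous fun x => D2 F ((1 / 2 : ℝ) ^ k • v) (x + c • v) := by
      unfold D2; fun_prop
    exact (this.enorm.measurable).pow_const q
  rw [lintegral_finsetSum]
  · refine Finset.sum_le_sum fun k _ => ?_
    rw [lintegral_const_mul]
    · rw [lintegral_finsetSum]
      · have h2 : ((2 : ℝ≥0∞) ^ K) ≠ 0 := by positivity
        have h2' : ((2 : ℝ≥0∞) ^ K) ≠ ∞ := by finiteness
        have hcard : ((2 : ℝ≥0∞) ^ K)⁻¹ * ∑ ω : Fin K → Bool, (((2 : ℝ≥0∞) ^ k) ^ q *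
            ∫⁻ z in D, ‖D2 F ((1 / 2 : ℝ) ^ k • v) z‖ₑ ^ q) =
            ((2 : ℝ≥0∞) ^ k) ^ q * ∫⁻ z in D, ‖D2 F ((1 / 2 : ℝ) ^ k • v) z‖ₑ ^ q := by
          rw [Finset.sum_const, nsmul_eq_mul, ← mul_assoc]
          have : (((Finset.univ : Finset (Fin K → Bool)).card : ℕ) : ℝ≥0∞) = 2 ^ K := by simp
          rw [this, ENNReal.inv_mul_cancel h2 h2', one_mul]
        rw [← hcard]
        refine mul_le_mul_right (Finset.sum_le_sum fun ω _ => ?_) _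
        rw [lintegral_const_mul _ (hmeas _ _)]
        refine mul_le_mul_right ?_ _
        refine shift_le (nb_meas hN _) (nb_meas hN _) _ (fun z hz => ?_) _
        have h0 := lep_nonneg k ω
        have h1 := lep_le k ω
        have hp : (0 : ℝ) < (1 / 2) ^ (k + 1) := by positivity
        have hp2 : (1 / 2 : ℝ) ^ k = 2 * (1 / 2) ^ (k + 1) := by rw [pow_succ]; ring
        have h3 := n_sub_le hN z ((2 * (lep k ω + (1 / 2) ^ (k + 1))) • v)
        rw [n_smul hN (by positivity)] at h3
        have h4 : 2 * (lep k ω + (1 / 2) ^ (k + 1)) * N v ≤ 2 * 1 * N v := by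
          gcongr; linarith
        have h5 : N z ≤ _ := hz
        show N _ ≤ _
        linarith
      · exact fun ω _ => (hmeas _ _).const_mul _
    · exact Finset.measurable_sum _ fun ω _ => (hmeas _ _).const_mul _
  · exact fun k _ => (Finset.measurable_sum _ fun ω _ => (hmeas _ _).const_mul _).const_mul _

end LVD

namespace LVD

open scoped Convolution

variable {n : ℕ} {N : EuclideanSpace ℝ (Fin n) → ℝ}

/-- trapezoid -/
def trap (N : EuclideanSpace ℝ (Fin n) → ℝ) (x : EuclideanSpace ℝ (Fin n)) : ℝ :=
  max 0 (min 1 (4 * n * (1 - N x) - 1))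

lemma trap_nonneg (x) : 0 ≤ trap N x := le_max_left _ _

lemma trap_le_one (x) : trap N x ≤ 1 := max_le zero_le_one (min_le_left _ _)

lemma trap_neg (hN : IsNorm N) (x) : trap N (-x) = trap N x := by
  unfold trap; rw [n_neg hN]

lemma trap_cont (hN : IsNorm N) : Continuous (trap N) := by
  have := n_cont hN
  unfold trap; fun_prop

lemma trap_zero (hn : 0 < n) {x} (hx : 1 - 1 / (4 * n) ≤ N x) : trap N x = 0 := by
  have hn' : (0 : ℝ) < n := by exact_mod_cast hn
  unfold trap
  refine max_eq_left ((min_le_right _ _).trans ?_)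
  have : 4 * n * (1 - N x) ≤ 4 * n * (1 / (4 * n)) := by gcongr; linarith
  have e : (4 * n * (1 / (4 * n)) : ℝ) = 1 := by field_simp
  linarith

lemma trap_one (hn : 0 < n) {x} (hx : N x ≤ 1 - 1 / (2 * n)) : trap N x = 1 := by
  have hn' : (0 : ℝ) < n := by exact_mod_cast hn
  unfold trap
  have : 4 * n * (1 / (2 * n)) ≤ 4 * n * (1 - N x) := by gcongr; linarith
  have e : (4 * n * (1 / (2 * n)) : ℝ) = 2 := by field_simp; norm_num
  rw [min_eq_left (by linarith), max_eq_right zero_le_one]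

lemma trap_lip (hN : IsNorm N) (x y) : |trap N x - trap N y| ≤ 4 * n * N (x - y) := by
  unfold trap
  refine (abs_max_sub_max_le_max _ _ _ _).trans ?_
  rw [sub_self, abs_zero]
  refine max_le (by have := n_nonneg hN (x - y); positivity) ?_
  refine (abs_min_sub_min_le_max _ _ _ _).trans ?_
  rw [sub_self, abs_zero]
  refine max_le (by have := n_nonneg hN (x - y); positivity) ?_
  have : (4 * n * (1 - N x) - 1 - (4 * n * (1 - N y) - 1) : ℝ) = - (4 * n * (N x - N y)) := by ring
  rw [this, abs_neg, abs_mul, abs_of_nonneg (by positivity)]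
  gcongr
  exact abs_n_sub hN x y

lemma trap_cs (hn : 0 < n) (hN : IsNorm N) : HasCompactSupport (trap N) := by
  refine HasCompactSupport.intro (nb_compact hN 1) fun x hx => ?_
  have hn' : (0 : ℝ) < n := by exact_mod_cast hn
  refine trap_zero hn ?_
  have : 1 < N x := not_le.1 hx
  have : (0 : ℝ) < 1 / (4 * n) := by positivity
  linarith

lemma exists_psi (hn : 0 < n) (hN : IsNorm N) :
    ∃ ψ : EuclideanSpace ℝ (Fin n) → ℝ, ContDiff ℝ 1 ψ ∧ HasCompactSupport ψ ∧ (∀ x, 0 ≤ ψ x) ∧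
      (∀ x, ψ (-x) = ψ x) ∧ ∫ x, ψ x = 1 ∧ (∀ x, x ∉ nb N 1 → ψ x = 0) ∧
      (∀ x, ψ x ≤ 2 / volume.real (nb N 1)) ∧
      (∀ x u, |fderiv ℝ ψ x u| ≤ 8 * n * N u / volume.real (nb N 1)) ∧
      (∀ x, x ∉ nb N 1 → fderiv ℝ ψ x = 0) := by
  have hn' : (0 : ℝ) < n := by exact_mod_cast hn
  obtain ⟨C, hC, hup⟩ := n_upper hN
  have hr : 0 < 1 / (4 * n * C) := by positivity
  let b : ContDiffBump (0 : EuclideanSpace ℝ (Fin n)) :=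
    ⟨1 / (4 * n * C) / 2, 1 / (4 * n * C), by positivity, by linarith⟩
  set η : EuclideanSpace ℝ (Fin n) → ℝ := b.normed volume with hη
  have hη0 : ∀ x, 0 ≤ η x := b.nonneg_normed
  have hηc : HasCompactSupport η := b.hasCompactSupport_normed
  have hηcont : Continuous η := b.continuous_normed
  have hηi : Integrable η := hηcont.integrable_of_hasCompactSupport hηc
  have hη1 : ∫ x, η x = 1 := b.integral_normed
  have htl : LocallyIntegrable (trap N) := (trap_cont hN).locallyIntegrable
  set p : EuclideanSpace ℝ (Fin n) → ℝ := η ⋆[ContinuousLinearMap.lsmul ℝ ℝ, volume] trap N with hp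
  have hpx : ∀ x, p x = ∫ s, η s * trap N (x - s) := fun x => by
    rw [hp, convolution_def]; simp
  have hintg : ∀ x, Integrable fun s => η s * trap N (x - s) := by
    intro x
    refine Continuous.integrable_of_hasCompactSupport ?_ hηc.mul_right
    have := trap_cont hN
    fun_prop
  have hpC : ContDiff ℝ 1 p := hηc.contDiff_convolution_left _ b.contDiff_normed htl
  have hp0 : ∀ x, 0 ≤ p x := fun x => by
    rw [hpx]; exact integral_nonneg fun s => mul_nonneg (hη0 s) (trap_nonneg _)
  have hp1 : ∀ x, p x ≤ 1 := fun x => by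
    rw [hpx, ← hη1]
    exact integral_mono (hintg x) hηi fun s => mul_le_of_le_one_right (hη0 s) (trap_le_one _)
  have hpn : ∀ x, p (-x) = p x := fun x => by
    rw [hpx, hpx, ← integral_neg_eq_self]
    refine integral_congr_ae (Filter.Eventually.of_forall fun s => ?_)
    simp only
    rw [hη, b.normed_neg, ← trap_neg hN, neg_sub, neg_sub_neg]
  have hpz : ∀ x, x ∉ nb N 1 → p x = 0 := fun x hx => by
    rw [hpx]
    refine integral_eq_zero_of_ae (Filter.Eventually.of_forall fun s => ?_)
    by_cases hs : η s = 0
    · simp [hs]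
    have hs' : s ∈ Function.support η := hs
    rw [hη, b.support_normed_eq, mem_ball_zero_iff] at hs'
    have h1 : N s ≤ 1 / (4 * n) := by
      calc N s ≤ C * ‖s‖ := hup s
        _ ≤ C * (1 / (4 * n * C)) := by gcongr
        _ = 1 / (4 * n) := by field_simp
    have h2 : 1 < N x := not_le.1 hx
    have h3 := hN.2.2 (x - s) s
    rw [sub_add_cancel] at h3
    simp [trap_zero hn (N := N) (x := x - s) (by linarith)]
  have hpl : ∀ x y, |p x - p y| ≤ 4 * n * N (x - y) := fun x y => by
    rw [hpx, hpx, ← integral_sub (hintg x) (hintg y)]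
    refine (abs_integral_le_integral_abs).trans ?_
    calc ∫ s, |η s * trap N (x - s) - η s * trap N (y - s)| ≤ ∫ s, η s * (4 * n * N (x - y)) := by
          refine integral_mono ((hintg x).sub (hintg y)).abs (hηi.mul_const _) fun s => ?_
          simp only
          rw [← mul_sub, abs_mul, abs_of_nonneg (hη0 s)]
          refine mul_le_mul_of_nonneg_left ?_ (hη0 s)
          have := trap_lip hN (x - s) (y - s)
          rwa [sub_sub_sub_cancel_right] at this
      _ = 4 * n * N (x - y) := by rw [integral_mul_const, hη1, one_mul]
  have hpcs : HasCompactSupport p := HasCompactSupport.intro (nb_compact hN 1) hpz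
  have hti : Integrable (trap N) := (trap_cont hN).integrable_of_hasCompactSupport (trap_cs hn hN)
  set V := volume.real (nb N 1) with hV
  have hV0 : 0 < V := by
    rw [hV, measureReal_def]; exact ENNReal.toReal_pos (nb_pos hN one_pos) (nb_fin hN 1)
  set J := ∫ x, p x with hJ
  have hJV : V / 2 ≤ J := by
    have h1 : J = ∫ x, trap N x := by
      rw [hJ, hp, integral_convolution _ hηi hti, hη1]; simp
    rw [h1]
    have h2 : V ≤ 2 * volume.real (nb N (1 - 1 / (2 * n))) := by
      have := ENNReal.toReal_mono (by have := nb_fin hN (1 - 1 / (2 * n)); finiteness) (nb_half hn hN)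
      rw [ENNReal.toReal_mul] at this; simpa only [hV, measureReal_def, ENNReal.toReal_ofNat] using this
    calc V / 2 ≤ volume.real (nb N (1 - 1 / (2 * n))) := by linarith
      _ = ∫ x in nb N (1 - 1 / (2 * n)), trap N x := by
          rw [setIntegral_congr_fun (nb_meas hN _) (fun x hx => trap_one hn hx)]; simp
      _ ≤ _ := setIntegral_le_integral hti (Filter.Eventually.of_forall trap_nonneg)
  have hJ0 : 0 < J := by linarith
  have hdz : ∀ x, x ∉ nb N 1 → fderiv ℝ (fun x => J⁻¹ * p x) x = 0 := fun x hx => by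
    have : (fun x => J⁻¹ * p x) =ᶠ[nhds x] fun _ => 0 := by
      filter_upwards [(nb_closed hN 1).isOpen_compl.mem_nhds hx] with y hy
      rw [hpz y hy, mul_zero]
    rw [this.fderiv_eq]; simp
  have hpC' : ContDiff ℝ 1 (fun x => J⁻¹ * p x) := contDiff_const.mul hpC
  refine ⟨fun x => J⁻¹ * p x, hpC', hpcs.mul_left, fun x => by have := hp0 x; positivity,
    fun x => by simp only [hpn], ?_, fun x hx => by simp only [hpz x hx, mul_zero], fun x => ?_,
    fun x u => ?_, hdz⟩
  · rw [integral_const_mul]; exact inv_mul_cancel₀ hJ0.ne'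
  · calc J⁻¹ * p x ≤ (V / 2)⁻¹ * 1 := by
          gcongr
          · exact hp0 x
          · exact hp1 x
      _ = 2 / V := by field_simp
  · have hd : HasFDerivAt (fun x => J⁻¹ * p x) (fderiv ℝ (fun x => J⁻¹ * p x) (x + (0 : ℝ) • u))
        (x + (0 : ℝ) • u) := (hpC'.differentiable one_ne_zero _).hasFDerivAt
    have hl : HasDerivAt (fun τ : ℝ => x + τ • u) u 0 := by
      simpa using ((hasDerivAt_id (0 : ℝ)).smul_const u).const_add x
    have h1 := hd.comp_hasDerivAt (0 : ℝ) hl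
    rw [zero_smul, add_zero] at h1
    have hc : 0 ≤ 8 * n * N u / V := by have := n_nonneg hN u; positivity
    refine h1.le_of_lip' hc (Filter.Eventually.of_forall fun τ => ?_)
    simp only [Function.comp]
    rw [← mul_sub, Real.norm_eq_abs, abs_mul, abs_of_pos (by positivity), Real.norm_eq_abs]
    calc J⁻¹ * |p (x + τ • u) - p (x + (0 : ℝ) • u)|
        ≤ (V / 2)⁻¹ * (4 * n * N ((x + τ • u) - (x + (0 : ℝ) • u))) := by
          gcongr; exact hpl _ _
      _ = 8 * n * N u / V * |τ - 0| := by
          rw [add_sub_add_left_eq_sub, ← sub_smul, hN.2.1]; field_simp; ring_nf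

end LVD

namespace LVD

open scoped Convolution

variable {n : ℕ} {N : EuclideanSpace ℝ (Fin n) → ℝ}
variable {Y : Type*} [NormedAddCommGroup Y] [NormedSpace ℝ Y]

/-- convolution of a scalar kernel with a vector valued function -/
def Conv (θ : EuclideanSpace ℝ (Fin n) → ℝ) (K : EuclideanSpace ℝ (Fin n) → Y)
    (z : EuclideanSpace ℝ (Fin n)) : Y := ∫ a, θ a • K (z - a)

lemma Conv_eq (θ : EuclideanSpace ℝ (Fin n) → ℝ) (K : EuclideanSpace ℝ (Fin n) → Y) :
    Conv θ K = θ ⋆[ContinuousLinearMap.lsmul ℝ ℝ, volume] K := by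
  ext z; simp [Conv, convolution]

lemma Conv_cont {θ : EuclideanSpace ℝ (Fin n) → ℝ} (hθ : Continuous θ) (hc : HasCompactSupport θ)
    {K : EuclideanSpace ℝ (Fin n) → Y} (hK : Continuous K) : Continuous (Conv θ K) := by
  rw [Conv_eq]
  exact hc.continuous_convolution_left _ hθ hK.locallyIntegrable

lemma Conv_int {θ : EuclideanSpace ℝ (Fin n) → ℝ} (hθ : Continuous θ) (hc : HasCompactSupport θ)
    {K : EuclideanSpace ℝ (Fin n) → Y} (hK : Continuous K) (z : EuclideanSpace ℝ (Fin n)) :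
    Integrable (fun a => θ a • K (z - a)) :=
  (hθ.smul (by fun_prop)).integrable_of_hasCompactSupport hc.smul_right

lemma Conv_fderiv [CompleteSpace Y] {ψ : EuclideanSpace ℝ (Fin n) → ℝ} (hψ : ContDiff ℝ 1 ψ)
    (hc : HasCompactSupport ψ)
    {K : EuclideanSpace ℝ (Fin n) → Y} (hK : Continuous K) (z : EuclideanSpace ℝ (Fin n)) :
    ∃ L : EuclideanSpace ℝ (Fin n) →L[ℝ] Y, HasFDerivAt (Conv ψ K) L z ∧
      ∀ u, L u = Conv (fun a => fderiv ℝ ψ a u) K z := by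
  refine ⟨_, Conv_eq ψ K ▸ hc.hasFDerivAt_convolution_left _ hψ hK.locallyIntegrable z, ?_⟩
  · intro u
    have hcd : HasCompactSupport (fderiv ℝ ψ) := hc.fderiv ℝ
    have hcont : Continuous (fderiv ℝ ψ) := hψ.continuous_fderiv one_ne_zero
    have hi : ConvolutionExistsAt (fderiv ℝ ψ) K z
      ((ContinuousLinearMap.lsmul ℝ ℝ).precompL (EuclideanSpace ℝ (Fin n))) volume :=
      hcd.convolutionExists_left _ hcont hK.locallyIntegrable z
    rw [convolution, ContinuousLinearMap.integral_apply hi]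
    simp [Conv]

/-- the double integrand is integrable -/
lemma dbl_int {θ φ : EuclideanSpace ℝ (Fin n) → ℝ} (hθ : Continuous θ) (hc : HasCompactSupport θ)
    (hφ : Continuous φ) (hd : HasCompactSupport φ)
    {H : EuclideanSpace ℝ (Fin n) × EuclideanSpace ℝ (Fin n) → Y} (hH : Continuous H) :
    Integrable (fun p : EuclideanSpace ℝ (Fin n) × EuclideanSpace ℝ (Fin n) =>
      (θ p.1 * φ p.2) • H p) (volume.prod volume) := by
  refine Continuous.integrable_of_hasCompactSupport (by fun_prop) ?_
  refine HasCompactSupport.intro (K := tsupport θ ×ˢ tsupport φ) (hc.prod hd) fun p hp => ?_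
  rw [mem_prod, not_and_or] at hp
  rcases hp with hp | hp
  · rw [image_eq_zero_of_notMem_tsupport hp, zero_mul, zero_smul]
  · rw [image_eq_zero_of_notMem_tsupport hp, mul_zero, zero_smul]

lemma dbl_eq [CompleteSpace Y] {θ φ : EuclideanSpace ℝ (Fin n) → ℝ} (hθ : Continuous θ) (hc : HasCompactSupport θ)
    (hφ : Continuous φ) (hd : HasCompactSupport φ)
    {K : EuclideanSpace ℝ (Fin n) → Y} (hK : Continuous K) (z : EuclideanSpace ℝ (Fin n)) :
    Conv θ (Conv φ K) z = ∫ p : EuclideanSpace ℝ (Fin n) × EuclideanSpace ℝ (Fin n),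
      (θ p.1 * φ p.2) • K (z - p.1 - p.2) ∂(volume.prod volume) := by
  rw [integral_prod _ (dbl_int hθ hc hφ hd (by fun_prop))]
  simp only [Conv, mul_smul, integral_smul]

lemma dbl_swap [CompleteSpace Y] {θ φ : EuclideanSpace ℝ (Fin n) → ℝ} (hθ : Continuous θ) (hc : HasCompactSupport θ)
    (hφ : Continuous φ) (hd : HasCompactSupport φ)
    {K : EuclideanSpace ℝ (Fin n) → Y} (hK : Continuous K) (z : EuclideanSpace ℝ (Fin n)) :
    Conv θ (Conv φ K) z = Conv φ (Conv θ K) z := by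
  rw [dbl_eq hθ hc hφ hd hK, dbl_eq hφ hd hθ hc hK, ← integral_prod_swap]
  simp only [Prod.fst_swap, Prod.snd_swap]
  congr 1; ext p
  rw [mul_comm, sub_right_comm]

lemma dbl_D2 [CompleteSpace Y] {θ φ : EuclideanSpace ℝ (Fin n) → ℝ} (hθ : Continuous θ) (hc : HasCompactSupport θ)
    (hφ : Continuous φ) (hd : HasCompactSupport φ)
    (hev : ∀ a b, θ (-a) * φ (-b) = θ a * φ b)
    {K : EuclideanSpace ℝ (Fin n) → Y} (hK : Continuous K) (z : EuclideanSpace ℝ (Fin n)) :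
    ∫ p : EuclideanSpace ℝ (Fin n) × EuclideanSpace ℝ (Fin n),
      (θ p.1 * φ p.2) • D2 K (p.1 + p.2) z ∂(volume.prod volume) =
    (2 : ℝ) • (Conv θ (Conv φ K) z - ((∫ a, θ a) * ∫ a, φ a) • K z) := by
  have i1 := dbl_int hθ hc hφ hd (H := fun p => K (z + (p.1 + p.2))) (by fun_prop)
  have i2 := dbl_int hθ hc hφ hd (H := fun p => K (z - (p.1 + p.2))) (by fun_prop)
  have i3 := dbl_int hθ hc hφ hd (H := fun p => (2 : ℝ) • K z) (by fun_prop)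
  have e2 : ∫ p : EuclideanSpace ℝ (Fin n) × EuclideanSpace ℝ (Fin n),
      (θ p.1 * φ p.2) • K (z - (p.1 + p.2)) ∂(volume.prod volume) = Conv θ (Conv φ K) z := by
    rw [dbl_eq hθ hc hφ hd hK]; simp only [sub_sub]
  have e1 : ∫ p : EuclideanSpace ℝ (Fin n) × EuclideanSpace ℝ (Fin n),
      (θ p.1 * φ p.2) • K (z + (p.1 + p.2)) ∂(volume.prod volume) = Conv θ (Conv φ K) z := by
    have hni : ((volume : Measure (EuclideanSpace ℝ (Fin n))).prod
        (volume : Measure (EuclideanSpace ℝ (Fin n)))).IsNegInvariant :=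
      Measure.IsAddHaarMeasure.isNegInvariant_of_regular _
    rw [← e2, ← integral_neg_eq_self]
    congr 1; ext p
    simp only [Prod.fst_neg, Prod.snd_neg, hev]
    congr 2; abel
  have e3 : ∫ p : EuclideanSpace ℝ (Fin n) × EuclideanSpace ℝ (Fin n),
      (θ p.1 * φ p.2) • ((2 : ℝ) • K z) ∂(volume.prod volume) =
      ((∫ a, θ a) * ∫ a, φ a) • ((2 : ℝ) • K z) := by
    rw [integral_smul_const, integral_prod_mul]
  simp only [D2, smul_sub, smul_add]
  rw [integral_sub, integral_add, e1, e2, e3, two_smul ℝ (Conv θ (Conv φ K) z), smul_comm]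
  · exact i1
  · exact i2
  · exact i1.add i2
  · exact i3

/-- uniform probability on the unit ball -/
def ub (N : EuclideanSpace ℝ (Fin n) → ℝ) : Measure (EuclideanSpace ℝ (Fin n)) :=
  (volume (nb N 1))⁻¹ • volume.restrict (nb N 1)

lemma ub_prob (hN : IsNorm N) : IsProbabilityMeasure (ub N) := ⟨by
  simp [ub, ENNReal.inv_mul_cancel (nb_pos hN one_pos) (nb_fin hN 1)]⟩

lemma dbl_bound {θ φ : EuclideanSpace ℝ (Fin n) → ℝ} (hN : IsNorm N) {A : ℝ} (hA : 0 ≤ A)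
    (hθ : ∀ x, |θ x| ≤ A / volume.real (nb N 1)) (hφ : ∀ x, |φ x| ≤ A / volume.real (nb N 1))
    (hθ0 : ∀ x, x ∉ nb N 1 → θ x = 0) (hφ0 : ∀ x, x ∉ nb N 1 → φ x = 0)
    (H : EuclideanSpace ℝ (Fin n) × EuclideanSpace ℝ (Fin n) → Y) :
    ‖∫ p, (θ p.1 * φ p.2) • H p ∂(volume.prod volume)‖ₑ ≤
      ENNReal.ofReal (A ^ 2) * ∫⁻ p, ‖H p‖ₑ ∂((ub N).prod (ub N)) := by
  have hV : (volume (nb N 1))⁻¹ ≠ ∞ := ENNReal.inv_ne_top.2 (nb_pos hN one_pos)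
  have hV0 : 0 < volume.real (nb N 1) := by
    rw [measureReal_def]; exact ENNReal.toReal_pos (nb_pos hN one_pos) (nb_fin hN 1)
  have hinv : ENNReal.ofReal (volume.real (nb N 1))⁻¹ = (volume (nb N 1))⁻¹ := by
    rw [ENNReal.ofReal_inv_of_pos hV0, measureReal_def, ENNReal.ofReal_toReal (nb_fin hN 1)]
  have hpi : (ub N).prod (ub N) = ((volume (nb N 1))⁻¹ * (volume (nb N 1))⁻¹) •
      (volume.prod volume).restrict (nb N 1 ×ˢ nb N 1) := by
    rw [ub, Measure.prod_smul_left, Measure.prod_smul_right, Measure.prod_restrict, smul_smul]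
  refine (enorm_integral_le_lintegral_enorm _).trans ?_
  rw [hpi, lintegral_smul_measure, smul_eq_mul, ← hinv, ← ENNReal.ofReal_mul (by positivity),
    ← mul_assoc, ← ENNReal.ofReal_mul (by positivity),
    ← lintegral_const_mul' _ _ ENNReal.ofReal_ne_top,
    ← lintegral_indicator ((nb_meas hN 1).prod (nb_meas hN 1))]
  refine lintegral_mono fun p => ?_
  simp only
  by_cases hp : p ∈ nb N 1 ×ˢ nb N 1
  · rw [indicator_of_mem hp, enorm_smul]
    gcongr
    rw [Real.enorm_eq_ofReal_abs]
    apply ENNReal.ofReal_le_ofReal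
    rw [abs_mul]
    calc |θ p.1| * |φ p.2| ≤ (A / volume.real (nb N 1)) * (A / volume.real (nb N 1)) := by
          gcongr
          · exact hθ _
          · exact hφ _
      _ = _ := by field_simp
  · rw [mem_prod, not_and_or] at hp
    rcases hp with hp | hp
    · rw [hθ0 _ hp, zero_mul, zero_smul, enorm_zero]; exact zero_le
    · rw [hφ0 _ hp, mul_zero, zero_smul, enorm_zero]; exact zero_le

end LVD

namespace LVD

variable {n : ℕ} {N : EuclideanSpace ℝ (Fin n) → ℝ}
variable {Y : Type*} [NormedAddCommGroup Y] [NormedSpace ℝ Y]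

/-- the parameter measure -/
def lam : Measure ℝ := (2 : ℝ≥0∞)⁻¹ • (Measure.dirac 1 + volume.restrict (Ioc (0 : ℝ) 1))

lemma lam_prob : IsProbabilityMeasure lam := ⟨by
  simp [lam, ENNReal.inv_two_add_inv_two]⟩

lemma lam_supp : ∀ᵐ τ ∂lam, τ ∈ Icc (0 : ℝ) 1 := by
  rw [lam]
  refine Measure.ae_smul_measure ?_ _
  rw [ae_add_measure_iff]
  constructor
  · rw [ae_dirac_eq]; simp
  · filter_upwards [ae_restrict_mem measurableSet_Ioc] with τ hτ
    exact ⟨hτ.1.le, hτ.2⟩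

lemma int_dpsi {ψ : EuclideanSpace ℝ (Fin n) → ℝ} (hψ : ContDiff ℝ 1 ψ)
    (hc : HasCompactSupport ψ) (u : EuclideanSpace ℝ (Fin n)) : ∫ a, fderiv ℝ ψ a u = 0 := by
  obtain ⟨L, hL, hLu⟩ := Conv_fderiv hψ hc (K := fun _ => (1 : ℝ)) continuous_const 0
  have h1 : Conv ψ (fun _ => (1 : ℝ)) = fun _ => ∫ a, ψ a := by ext z; simp [Conv]
  rw [h1] at hL
  have h2 : L = 0 := hL.unique (hasFDerivAt_const _ _)
  have := hLu u
  rw [h2] at this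
  simpa [Conv] using this.symm

lemma Conv_lip {ψ : EuclideanSpace ℝ (Fin n) → ℝ} (hN : IsNorm N) (hψ : Continuous ψ)
    (hc : HasCompactSupport ψ) (h0 : ∀ x, 0 ≤ ψ x) (h1 : ∫ x, ψ x = 1)
    (hz : ∀ x, x ∉ nb N 1 → ψ x = 0) {K : EuclideanSpace ℝ (Fin n) → Y} (hK : Continuous K)
    {X : EuclideanSpace ℝ (Fin n)} {R ℓ : ℝ}
    (hl : ∀ a b, N (a - X) ≤ R + 1 → N (b - X) ≤ R + 1 → ‖K a - K b‖ ≤ ℓ * N (a - b)) :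
    ∀ a b, N (a - X) ≤ R → N (b - X) ≤ R → ‖Conv ψ K a - Conv ψ K b‖ ≤ ℓ * N (a - b) := by
  intro a b ha hb
  rw [Conv, Conv, ← integral_sub (Conv_int hψ hc hK a) (Conv_int hψ hc hK b)]
  have hi : Integrable (fun s => ψ s * (ℓ * N (a - b))) :=
    (hψ.integrable_of_hasCompactSupport hc).mul_const _
  refine (norm_integral_le_of_norm_le hi (Filter.Eventually.of_forall fun s => ?_)).trans ?_
  · rw [← smul_sub, norm_smul, Real.norm_eq_abs, abs_of_nonneg (h0 s)]
    by_cases hs : s ∈ nb N 1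
    · refine mul_le_mul_of_nonneg_left ?_ (h0 s)
      have := hl (a - s) (b - s)
        (by
          have := n_sub_le hN (a - X) s; rw [mem_nb] at hs
          rw [sub_right_comm]; linarith)
        (by
          have := n_sub_le hN (b - X) s; rw [mem_nb] at hs
          rw [sub_right_comm]; linarith)
      rwa [sub_sub_sub_cancel_right] at this
    · rw [hz s hs, zero_mul, zero_mul]
  · rw [integral_mul_const, h1, one_mul]

lemma taylor [CompleteSpace Y] (hn : 0 < n) (hN : IsNorm N) {G : EuclideanSpace ℝ (Fin n) → Y}
    (hG : Continuous G) (X : EuclideanSpace ℝ (Fin n)) :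
    ∃ (p : Y) (L : EuclideanSpace ℝ (Fin n) →L[ℝ] Y),
      (∀ U, N U ≤ 1 / n → ‖G (X + U) - p - L U‖ₑ ≤ 64 * ∫⁻ τ, ∫⁻ w,
        ‖D2 G (w.1 + w.2) (X + τ • U)‖ₑ ∂((ub N).prod (ub N)) ∂lam) ∧
      (∀ ℓ : ℝ, 0 ≤ ℓ → (∀ a b, N (a - X) ≤ 3 → N (b - X) ≤ 3 → ‖G a - G b‖ ≤ ℓ * N (a - b)) →
        ∀ u, ‖L u‖ ≤ ℓ * N u) := by
  obtain ⟨ψ, hψC, hψc, hψ0, hψn, hψ1, hψz, hψb, hψd, hψdz⟩ := exists_psi hn hN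
  have hψ : Continuous ψ := hψC.continuous
  have hGψ : Continuous (Conv ψ G) := Conv_cont hψ hψc hG
  set P := Conv ψ (Conv ψ G) with hP
  have hder := fun z => Conv_fderiv hψC hψc hGψ z
  choose L hL hLu using hder
  have hn' : (0 : ℝ) < n := by exact_mod_cast hn
  have hV0 : 0 < volume.real (nb N 1) := by
    rw [measureReal_def]; exact ENNReal.toReal_pos (nb_pos hN one_pos) (nb_fin hN 1)
  refine ⟨P X, L X, fun U hU => ?_, fun ℓ hℓ hl u => ?_⟩
  · set d : EuclideanSpace ℝ (Fin n) → ℝ := fun a => fderiv ℝ ψ a U with hd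
    have hdc : Continuous d := (hψC.continuous_fderiv one_ne_zero).clm_apply continuous_const
    have hdz : ∀ x, x ∉ nb N 1 → d x = 0 := fun x hx => by simp [hd, hψdz x hx]
    have hds : HasCompactSupport d := HasCompactSupport.intro (nb_compact hN 1) hdz
    have hdn : ∀ a, d (-a) = - d a := fun a => by
      have h0 : HasFDerivAt ψ (fderiv ℝ ψ (-a)) (-a) :=
        (hψC.differentiable one_ne_zero _).hasFDerivAt
      have h1 := HasFDerivAt.comp a h0 (hasFDerivAt_id a).neg
      have h2 : (ψ ∘ Neg.neg) = ψ := funext hψn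
      replace h1 : HasFDerivAt (ψ ∘ Neg.neg) _ a := h1
      rw [h2] at h1
      simp [hd, h1.fderiv]
    have hdb : ∀ x, |d x| ≤ 8 / volume.real (nb N 1) := fun x => (hψd x U).trans (by
      gcongr
      calc 8 * n * N U ≤ 8 * n * (1 / n) := by gcongr
        _ = 8 := by field_simp)
    have hdG : Continuous (Conv d G) := Conv_cont hdc hds hG
    have hddG : Continuous (Conv d (Conv d G)) := Conv_cont hdc hds hdG
    have hline : ∀ τ : ℝ, HasDerivAt (fun τ : ℝ => X + τ • U) U τ := fun τ => by
      simpa using ((hasDerivAt_id τ).smul_const U).const_add X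
    have g1 : ∀ τ : ℝ, HasDerivAt (fun τ : ℝ => P (X + τ • U)) (Conv ψ (Conv d G) (X + τ • U)) τ := by
      intro τ
      have := (hL (X + τ • U)).comp_hasDerivAt τ (hline τ)
      rw [hLu, ← hd, dbl_swap hdc hds hψ hψc hG] at this
      exact this
    have g2 : ∀ τ : ℝ, HasDerivAt (fun τ : ℝ => Conv ψ (Conv d G) (X + τ • U))
        (Conv d (Conv d G) (X + τ • U)) τ := by
      intro τ
      obtain ⟨L', hL', hLu'⟩ := Conv_fderiv hψC hψc hdG (X + τ • U)
      have := hL'.comp_hasDerivAt τ (hline τ)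
      rw [hLu', ← hd] at this
      exact this
    have g3 : ∀ τ : ℝ, HasDerivAt (fun τ : ℝ => (1 - τ) • Conv ψ (Conv d G) (X + τ • U) + P (X + τ • U))
        ((1 - τ) • Conv d (Conv d G) (X + τ • U)) τ := by
      intro τ
      have h1 : HasDerivAt (fun τ : ℝ => 1 - τ) (-1) τ := by
        simpa using (hasDerivAt_id τ).const_sub 1
      have := (h1.smul (g2 τ)).add (g1 τ)
      rw [neg_one_smul, neg_add_cancel_right] at this
      exact this
    have hfc : Continuous fun τ : ℝ => (1 - τ) • Conv d (Conv d G) (X + τ • U) := by fun_prop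
    have ftc := intervalIntegral.integral_eq_sub_of_hasDerivAt (a := 0) (b := 1) (fun τ _ => g3 τ)
      (hfc.intervalIntegrable _ _)
    have hLX : L X U = Conv ψ (Conv d G) X := by rw [hLu, ← hd, dbl_swap hdc hds hψ hψc hG]
    have e1 : P (X + U) - P X - L X U =
        ∫ τ in Ioc (0 : ℝ) 1, (1 - τ) • Conv d (Conv d G) (X + τ • U) := by
      rw [← intervalIntegral.integral_of_le zero_le_one, ftc, hLX]
      simp; abel
    set D : ℝ → ℝ≥0∞ := fun τ => ∫⁻ w, ‖D2 G (w.1 + w.2) (X + τ • U)‖ₑ ∂((ub N).prod (ub N)) with hD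
    have b1 : ‖P (X + U) - P X - L X U‖ₑ ≤ ∫⁻ τ in Ioc (0 : ℝ) 1, 32 * D τ := by
      rw [e1]
      refine (enorm_integral_le_lintegral_enorm _).trans ?_
      refine setLIntegral_mono' measurableSet_Ioc fun τ hτ => ?_
      have h1 := dbl_D2 hdc hds hdc hds (fun a b => by rw [hdn, hdn]; ring) hG (X + τ • U)
      have h2 := dbl_bound hN (by norm_num : (0 : ℝ) ≤ 8) hdb hdb hdz hdz
        (fun p => D2 G (p.1 + p.2) (X + τ • U))
      rw [h1, int_dpsi hψC hψc, zero_mul, zero_smul, sub_zero, enorm_smul] at h2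
      rw [enorm_smul]
      have h3 : ‖(1 - τ : ℝ)‖ₑ ≤ 1 := by
        rw [Real.enorm_eq_ofReal_abs, abs_of_nonneg (by linarith [hτ.2])]
        exact ENNReal.ofReal_le_one.2 (by linarith [hτ.1])
      have h4 : 2 * ‖Conv d (Conv d G) (X + τ • U)‖ₑ ≤ 2 * (32 * D τ) := by
        calc _ ≤ _ := by simpa [Real.enorm_eq_ofReal_abs] using h2
          _ = 2 * (32 * D τ) := by
            rw [← mul_assoc]; congr 1; norm_num
      rw [ENNReal.mul_le_mul_iff_right (by norm_num) (by norm_num)] at h4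
      calc _ ≤ 1 * (32 * D τ) := mul_le_mul' h3 h4
        _ = _ := one_mul _
    have b2 : ‖G (X + U) - P (X + U)‖ₑ ≤ 32 * D 1 := by
      have h1 := dbl_D2 hψ hψc hψ hψc (fun a b => by rw [hψn, hψn]) hG (X + U)
      have h2 := dbl_bound hN (by norm_num : (0 : ℝ) ≤ 2) (fun x => by rw [abs_of_nonneg (hψ0 x)]; exact hψb x)
        (fun x => by rw [abs_of_nonneg (hψ0 x)]; exact hψb x) hψz hψz
        (fun p => D2 G (p.1 + p.2) (X + U))
      rw [h1, hψ1, mul_one, one_smul, enorm_smul, ← hP] at h2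
      rw [← enorm_neg, neg_sub]
      have h4 : 2 * ‖P (X + U) - G (X + U)‖ₑ ≤ 2 * (2 * D 1) := by
        calc _ ≤ _ := by simpa [Real.enorm_eq_ofReal_abs] using h2
          _ = 2 * (2 * D 1) := by
            rw [← mul_assoc, hD]; simp only [one_smul]; congr 1; norm_num
      rw [ENNReal.mul_le_mul_iff_right (by norm_num) (by norm_num)] at h4
      refine h4.trans ?_
      gcongr; norm_num
    calc ‖G (X + U) - P X - L X U‖ₑ = ‖(G (X + U) - P (X + U)) + (P (X + U) - P X - L X U)‖ₑ := by
          congr 1; abel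
      _ ≤ _ := enorm_add_le _ _
      _ ≤ 32 * D 1 + ∫⁻ τ in Ioc (0 : ℝ) 1, 32 * D τ := add_le_add b2 b1
      _ = 64 * ∫⁻ τ, D τ ∂lam := by
          rw [lam, lintegral_smul_measure, lintegral_add_measure, lintegral_dirac,
            lintegral_const_mul' _ _ (by norm_num), ← mul_add, smul_eq_mul, ← mul_assoc]
          congr 1
          rw [show (64 : ℝ≥0∞) = 32 * 2 by norm_num, mul_assoc,
            ENNReal.mul_inv_cancel (by norm_num) (by norm_num), mul_one]
  · have l1 := Conv_lip hN hψ hψc hψ0 hψ1 hψz hG (X := X) (R := 2) (ℓ := ℓ)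
      (by intro a b; norm_num; exact hl a b)
    have l2 := Conv_lip hN hψ hψc hψ0 hψ1 hψz hGψ (X := X) (R := 1) (ℓ := ℓ)
      (by intro a b; norm_num; exact l1 a b)
    have hline : HasDerivAt (fun τ : ℝ => X + τ • u) u 0 := by
      simpa using ((hasDerivAt_id (0 : ℝ)).smul_const u).const_add X
    have hX : HasFDerivAt P (L X) (X + (0 : ℝ) • u) := by simpa using hL X
    have h1 := hX.comp_hasDerivAt (0 : ℝ) hline
    have hu := n_nonneg hN u
    refine h1.le_of_lip' (by positivity) ?_
    have hcN : Continuous fun τ : ℝ => N (τ • u) := (n_cont hN).comp (by fun_prop)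
    have hev : ∀ᶠ τ in nhds (0 : ℝ), N (τ • u) < 1 :=
      hcN.continuousAt.eventually_lt_const (by simp [n_zero hN])
    filter_upwards [hev] with τ hτ
    simp only [Function.comp]
    refine (l2 _ _ (by simpa using hτ.le) (by simp [n_zero hN])).trans ?_
    rw [add_sub_add_left_eq_sub, ← sub_smul, hN.2.1, Real.norm_eq_abs]
    exact le_of_eq (by ring)

end LVD

namespace LVD

variable {n : ℕ} {N : EuclideanSpace ℝ (Fin n) → ℝ}
variable {Y : Type*} [NormedAddCommGroup Y] [NormedSpace ℝ Y]

lemma jensen {α : Type*} [MeasurableSpace α] {μ : Measure α} [IsProbabilityMeasure μ] {q : ℝ}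
    (hq : 2 ≤ q) {h : α → ℝ≥0∞} (hh : AEMeasurable h μ) : (∫⁻ t, h t ∂μ) ^ q ≤ ∫⁻ t, h t ^ q ∂μ := by
  have hq0 : 0 < q := by linarith
  have hpq : q.HolderConjugate (q / (q - 1)) := Real.HolderConjugate.conjExponent (by linarith)
  have h1 := ENNReal.lintegral_mul_le_Lp_mul_Lq μ hpq hh (g := fun _ => 1) aemeasurable_const
  simp only [Pi.mul_apply, mul_one, ENNReal.one_rpow, lintegral_one, measure_univ] at h1
  calc (∫⁻ t, h t ∂μ) ^ q ≤ ((∫⁻ t, h t ^ q ∂μ) ^ (1 / q)) ^ q := by gcongr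
    _ = _ := by rw [← ENNReal.rpow_mul, one_div_mul_cancel hq0.ne', ENNReal.rpow_one]

/-- all averaging parameters -/
def PiM (N : EuclideanSpace ℝ (Fin n) → ℝ) :
    Measure (ℝ × (EuclideanSpace ℝ (Fin n) × EuclideanSpace ℝ (Fin n))) :=
  lam.prod ((ub N).prod (ub N))

lemma PiM_prob (hN : IsNorm N) : IsProbabilityMeasure (PiM N) := by
  have := ub_prob hN
  have := lam_prob
  unfold PiM; infer_instance

lemma PiM_supp (hN : IsNorm N) : ∀ᵐ t ∂(PiM N), t.1 ∈ Icc (0 : ℝ) 1 ∧ N (t.2.1 + t.2.2) ≤ 2 := by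
  have := ub_prob hN
  have := lam_prob
  have h1 : ∀ᵐ w ∂(ub N), N w ≤ 1 := by
    rw [ub]
    refine Measure.ae_smul_measure ?_ _
    filter_upwards [ae_restrict_mem (nb_meas hN 1)] with w hw using hw
  have q1 : Measure.QuasiMeasurePreserving (fun t : ℝ × (EuclideanSpace ℝ (Fin n) × EuclideanSpace ℝ (Fin n)) => t.1)
      (PiM N) lam := Measure.quasiMeasurePreserving_fst
  have q2 : Measure.QuasiMeasurePreserving (fun t : ℝ × (EuclideanSpace ℝ (Fin n) × EuclideanSpace ℝ (Fin n)) => t.2)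
      (PiM N) ((ub N).prod (ub N)) := Measure.quasiMeasurePreserving_snd
  have q3 : Measure.QuasiMeasurePreserving (fun t : ℝ × (EuclideanSpace ℝ (Fin n) × EuclideanSpace ℝ (Fin n)) => t.2.1)
      (PiM N) (ub N) := Measure.quasiMeasurePreserving_fst.comp q2
  have q4 : Measure.QuasiMeasurePreserving (fun t : ℝ × (EuclideanSpace ℝ (Fin n) × EuclideanSpace ℝ (Fin n)) => t.2.2)
      (PiM N) (ub N) := Measure.quasiMeasurePreserving_snd.comp q2
  filter_upwards [q1.ae lam_supp, q3.ae h1, q4.ae h1] with t a b c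
  exact ⟨a, (hN.2.2 _ _).trans (by linarith)⟩

lemma scale_pt [CompleteSpace Y] (hn : 0 < n) (hN : IsNorm N) {q : ℝ} (hq : 2 ≤ q)
    {F : EuclideanSpace ℝ (Fin n) → Y}
    (hF : Continuous F) (hL : ∀ x, N x ≤ 1 → ∀ y, N y ≤ 1 → ‖F x - F y‖ ≤ N (x - y))
    {x : EuclideanSpace ℝ (Fin n)} (hx : N x ≤ 1 - 1 / (2 * n)) {ρ : ℝ} (hρ : 0 < ρ)
    (hρT : ρ ≤ 1 / (32 * n ^ 2)) :
    ∃ Λ : EuclideanSpace ℝ (Fin n) →ᵃ[ℝ] Y, (∀ u v, ‖Λ u - Λ v‖ ≤ 2 * N (u - v)) ∧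
      ∀ u, N u ≤ ρ → ‖F (x + u) - Λ (x + u)‖ₑ ^ q ≤ 64 ^ q * ∫⁻ t,
        ‖D2 F (ρ • ((n : ℝ) • (t.2.1 + t.2.2))) (x + t.1 • u)‖ₑ ^ q ∂(PiM N) := by
  have hn' : (0 : ℝ) < n := by exact_mod_cast hn
  have := PiM_prob hN
  have := ub_prob hN
  have := lam_prob
  set s : ℝ := ρ * n with hs
  have hs0 : 0 < s := by positivity
  have hs3 : 3 * s ≤ 1 / (2 * n) := by
    calc 3 * s ≤ 3 * (1 / (32 * n ^ 2) * n) := by rw [hs]; gcongr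
      _ = (3 / 16) * (1 / (2 * n)) := by field_simp; norm_num
      _ ≤ 1 / (2 * n) := by
        have : 0 < 1 / (2 * (n : ℝ)) := by positivity
        linarith
  set G : EuclideanSpace ℝ (Fin n) → Y := fun z => F (s • z) with hGd
  have hG : Continuous G := hF.comp (by fun_prop)
  obtain ⟨p, L, h1, h2⟩ := taylor hn hN hG (s⁻¹ • x)
  have h3 : ∀ u, ‖L u‖ ≤ s * N u := by
    refine h2 s hs0.le fun a b ha hb => ?_
    have key : ∀ a, N (a - s⁻¹ • x) ≤ 3 → N (s • a) ≤ 1 := fun a ha => by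
      have e : s • a = x + s • (a - s⁻¹ • x) := by
        rw [smul_sub, smul_inv_smul₀ hs0.ne']; abel
      rw [e]
      refine (hN.2.2 _ _).trans ?_
      rw [n_smul hN hs0.le]
      nlinarith
    refine (hL _ (key a ha) _ (key b hb)).trans ?_
    rw [← smul_sub, n_smul hN hs0.le]
  let A : EuclideanSpace ℝ (Fin n) →ᵃ[ℝ] Y :=
    ((s⁻¹ • L : EuclideanSpace ℝ (Fin n) →L[ℝ] Y) : EuclideanSpace ℝ (Fin n) →ₗ[ℝ] Y).toAffineMap
      + AffineMap.const ℝ _ (p - s⁻¹ • L x)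
  have hA : ∀ y, A y = p + s⁻¹ • L (y - x) := fun y => by
    simp [A, smul_sub]; abel
  refine ⟨A, fun u v => ?_, fun u hu => ?_⟩
  · rw [hA, hA, add_sub_add_left_eq_sub, ← smul_sub, ← map_sub, sub_sub_sub_cancel_right, norm_smul,
      Real.norm_eq_abs, abs_of_pos (by positivity)]
    have := h3 (u - v)
    have h0 := n_nonneg hN (u - v)
    calc s⁻¹ * ‖L (u - v)‖ ≤ s⁻¹ * (s * N (u - v)) := by gcongr
      _ = N (u - v) := by field_simp
      _ ≤ _ := by linarith
  · have h4 := h1 (s⁻¹ • u) (by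
      rw [n_smul hN (by positivity)]
      calc s⁻¹ * N u ≤ s⁻¹ * ρ := by gcongr
        _ = 1 / n := by rw [hs]; field_simp)
    have e1 : G (s⁻¹ • x + s⁻¹ • u) - p - L (s⁻¹ • u) = F (x + u) - A (x + u) := by
      rw [hA, add_sub_cancel_left, ← smul_add, hGd]
      simp only [smul_inv_smul₀ hs0.ne', map_smul]; abel
    have e2 : ∀ (τ : ℝ) (w : EuclideanSpace ℝ (Fin n)), D2 G w (s⁻¹ • x + τ • s⁻¹ • u) =
        D2 F (ρ • ((n : ℝ) • w)) (x + τ • u) := fun τ w => by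
      have e3 : s • (s⁻¹ • x + τ • s⁻¹ • u) = x + τ • u := by
        rw [smul_add, smul_inv_smul₀ hs0.ne', smul_comm s τ, smul_inv_smul₀ hs0.ne']
      simp only [D2, hGd, smul_add s, smul_sub s, smul_smul ρ, ← hs]
      simp only [← smul_add s, e3]
    simp only [e1, e2] at h4
    have hcont : Continuous fun t : ℝ × (EuclideanSpace ℝ (Fin n) × EuclideanSpace ℝ (Fin n)) =>
        D2 F (ρ • ((n : ℝ) • (t.2.1 + t.2.2))) (x + t.1 • u) := by
      have := D2_cont hF
      unfold D2; fun_prop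
    have hm : Measurable fun t : ℝ × (EuclideanSpace ℝ (Fin n) × EuclideanSpace ℝ (Fin n)) =>
        ‖D2 F (ρ • ((n : ℝ) • (t.2.1 + t.2.2))) (x + t.1 • u)‖ₑ := hcont.enorm.measurable
    have h5 : ‖F (x + u) - A (x + u)‖ₑ ≤ 64 * ∫⁻ t,
        ‖D2 F (ρ • ((n : ℝ) • (t.2.1 + t.2.2))) (x + t.1 • u)‖ₑ ∂(PiM N) := by
      rw [PiM, lintegral_prod _ hm.aemeasurable]; exact h4
    calc _ ≤ _ := ENNReal.rpow_le_rpow h5 (by linarith)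
      _ ≤ _ := by
        rw [ENNReal.mul_rpow_of_nonneg _ _ (by linarith)]
        gcongr
        exact jensen hq hm.aemeasurable

/-- the second difference functional -/
def QF (N : EuclideanSpace ℝ (Fin n) → ℝ) (q : ℝ) (F : EuclideanSpace ℝ (Fin n) → Y)
    (v : EuclideanSpace ℝ (Fin n)) : ℝ≥0∞ :=
  ∫⁻ z in nb N (1 - 1 / (4 * n)), ‖D2 F v z‖ₑ ^ q

lemma QF_meas {q : ℝ} {F : EuclideanSpace ℝ (Fin n) → Y} (hF : Continuous F) :
    Measurable (QF N q F) := by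
  refine Measurable.lintegral_prod_right' (f := fun p : EuclideanSpace ℝ (Fin n) × EuclideanSpace ℝ (Fin n) =>
    ‖D2 F p.1 p.2‖ₑ ^ q) ?_
  have : Continuous fun p : EuclideanSpace ℝ (Fin n) × EuclideanSpace ℝ (Fin n) => D2 F p.1 p.2 := by
    unfold D2; fun_prop
  exact this.enorm.measurable.pow_const q

end LVD

namespace LVD

variable {n : ℕ} {N : EuclideanSpace ℝ (Fin n) → ℝ}
variable {Y : Type*} [NormedAddCommGroup Y] [NormedSpace ℝ Y]

/-- the inner integral of the statement -/
def Inn (N : EuclideanSpace ℝ (Fin n) → ℝ) (q : ℝ) (f : EuclideanSpace ℝ (Fin n) → Y) (ρ : ℝ) : ℝ≥0∞ :=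
  ∫⁻ x in {x : EuclideanSpace ℝ (Fin n) | N x ≤ 1 - 1 / (2 * n)},
    ⨅ Λ ∈ {Λ : EuclideanSpace ℝ (Fin n) →ᵃ[ℝ] Y | ∀ u v, ‖Λ u - Λ v‖ ≤ 2 * N (u - v)},
      ((∫⁻ y in {y : EuclideanSpace ℝ (Fin n) | N (y - x) ≤ ρ}, (‖f y - Λ y‖₊ : ℝ≥0∞) ^ q)
        / volume {y : EuclideanSpace ℝ (Fin n) | N (y - x) ≤ ρ}) / ENNReal.ofReal (ρ ^ q)

lemma ball_vol (hN : IsNorm N) (x : EuclideanSpace ℝ (Fin n)) (ρ : ℝ) :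
    volume {y : EuclideanSpace ℝ (Fin n) | N (y - x) ≤ ρ} = volume (nb N ρ) := by
  have : {y : EuclideanSpace ℝ (Fin n) | N (y - x) ≤ ρ} = (fun y => y + (-x)) ⁻¹' (nb N ρ) := by
    ext y; simp [nb, sub_eq_add_neg]
  rw [this, measure_preimage_add_right]

lemma ball_meas (hN : IsNorm N) (x : EuclideanSpace ℝ (Fin n)) (ρ : ℝ) :
    MeasurableSet {y : EuclideanSpace ℝ (Fin n) | N (y - x) ≤ ρ} :=
  (isClosed_le ((n_cont hN).comp (by fun_prop)) continuous_const).measurableSet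

/-- trivial bound by constants -/
lemma Inn_triv (hn : 0 < n) (hN : IsNorm N) {q : ℝ} (hq : 2 ≤ q) {f : EuclideanSpace ℝ (Fin n) → Y}
    (hL : ∀ x, N x ≤ 1 → ∀ y, N y ≤ 1 → ‖f x - f y‖ ≤ N (x - y))
    {ρ : ℝ} (hρ : 0 < ρ) (hρT : ρ ≤ 1 / (2 * n)) :
    Inn N q f ρ ≤ volume (nb N (1 - 1 / (2 * n))) := by
  have hn' : (0 : ℝ) < n := by exact_mod_cast hn
  have h1 : volume (nb N (1 - 1 / (2 * n))) = ∫⁻ x in nb N (1 - 1 / (2 * n)), 1 := by simp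
  rw [h1, Inn]
  refine setLIntegral_mono' (nb_meas hN _) fun x hx => ?_
  replace hx : N x ≤ 1 - 1 / (2 * n) := hx
  refine (iInf₂_le (AffineMap.const ℝ _ (f x)) ?_).trans ?_
  · intro u v; simp; exact n_nonneg hN _
  · rw [ball_vol hN, ENNReal.ofReal_rpow_of_pos hρ |>.symm]
    refine ENNReal.div_le_of_le_mul (ENNReal.div_le_of_le_mul ?_)
    rw [one_mul, ← ball_vol hN x, ← setLIntegral_const]
    refine setLIntegral_mono' (ball_meas hN x ρ) fun y hy => ?_
    replace hy : N (y - x) ≤ ρ := hy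
    refine ENNReal.rpow_le_rpow ?_ (by linarith)
    have hx1 : N x ≤ 1 := hx.trans (by have : 0 < 1 / (2 * (n : ℝ)) := by positivity
                                       linarith)
    have hy1 : N y ≤ 1 := by
      have := hN.2.2 (y - x) x
      rw [sub_add_cancel] at this; linarith
    have := hL y hy1 x hx1
    change ‖f y - f x‖ₑ ≤ _
    rw [← ofReal_norm]
    exact ENNReal.ofReal_le_ofReal (this.trans hy)

lemma Inn_bound [CompleteSpace Y] (hn : 0 < n) (hN : IsNorm N) {q : ℝ} (hq : 2 ≤ q)
    {f F : EuclideanSpace ℝ (Fin n) → Y} (hfF : ∀ x, N x ≤ 1 → f x = F x)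
    (hF : Continuous F) (hL : ∀ x, N x ≤ 1 → ∀ y, N y ≤ 1 → ‖F x - F y‖ ≤ N (x - y))
    {ρ : ℝ} (hρ : 0 < ρ) (hρT : ρ ≤ 1 / (32 * n ^ 2)) :
    Inn N q f ρ ≤ 64 ^ q * ((∫⁻ t, QF N q F (ρ • ((n : ℝ) • (t.2.1 + t.2.2))) ∂(PiM N)) /
      ENNReal.ofReal (ρ ^ q)) := by
  have hn' : (0 : ℝ) < n := by exact_mod_cast hn
  have hn1 : (1 : ℝ) ≤ n := by exact_mod_cast hn
  have := PiM_prob hN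
  have hρ4 : ρ ≤ 1 / (4 * n) := hρT.trans (by
    apply one_div_le_one_div_of_le (by positivity); nlinarith)
  have hρ2 : ρ ≤ 1 / (2 * n) := hρ4.trans (by gcongr; norm_num)
  have hq0 : 0 ≤ q := by linarith
  have h64 : (64 : ℝ≥0∞) ^ q ≠ ∞ := ENNReal.rpow_ne_top_of_nonneg hq0 (by norm_num)
  have hV0 := nb_pos hN hρ
  have hV1 := nb_fin hN ρ
  set H : EuclideanSpace ℝ (Fin n) → EuclideanSpace ℝ (Fin n) →
    (ℝ × (EuclideanSpace ℝ (Fin n) × EuclideanSpace ℝ (Fin n))) → ℝ≥0∞ := fun x u t =>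
      ‖D2 F (ρ • ((n : ℝ) • (t.2.1 + t.2.2))) (x + t.1 • u)‖ₑ ^ q with hH
  have step1 : Inn N q f ρ ≤ ∫⁻ x in nb N (1 - 1 / (2 * n)),
      (64 ^ q * (ENNReal.ofReal (ρ ^ q))⁻¹ * (volume (nb N ρ))⁻¹) *
        ∫⁻ u in nb N ρ, ∫⁻ t, H x u t ∂(PiM N) := by
    rw [Inn]
    refine setLIntegral_mono' (nb_meas hN _) fun x hx => ?_
    replace hx : N x ≤ 1 - 1 / (2 * n) := hx
    obtain ⟨Λ, hΛ, hb⟩ := scale_pt hn hN hq hF hL hx hρ hρT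
    refine (iInf₂_le Λ hΛ).trans ?_
    rw [ball_vol hN]
    have e : ∫⁻ y in {y : EuclideanSpace ℝ (Fin n) | N (y - x) ≤ ρ}, (‖f y - Λ y‖₊ : ℝ≥0∞) ^ q ≤
        64 ^ q * ∫⁻ u in nb N ρ, ∫⁻ t, H x u t ∂(PiM N) := by
      rw [← lintegral_const_mul' _ _ h64]
      refine (shift_le (ball_meas hN x ρ) (nb_meas hN ρ) x (fun z hz => hz) _).trans ?_
      refine setLIntegral_mono' (nb_meas hN _) fun u hu => ?_
      replace hu : N u ≤ ρ := hu
      have h1 : N (u + x) ≤ 1 := by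
        have := hN.2.2 u x; linarith
      rw [hfF _ h1, add_comm u x]
      exact hb u hu
    calc _ ≤ (64 ^ q * ∫⁻ u in nb N ρ, ∫⁻ t, H x u t ∂(PiM N)) / volume (nb N ρ) /
            ENNReal.ofReal (ρ ^ q) := by gcongr
      _ = _ := by rw [div_eq_mul_inv, div_eq_mul_inv]; ring
  have hm1 : Measurable fun p : EuclideanSpace ℝ (Fin n) × EuclideanSpace ℝ (Fin n) =>
      ∫⁻ t, H p.1 p.2 t ∂(PiM N) := by
    refine Measurable.lintegral_prod_right' (f := fun p : (EuclideanSpace ℝ (Fin n) ×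
      EuclideanSpace ℝ (Fin n)) × (ℝ × (EuclideanSpace ℝ (Fin n) × EuclideanSpace ℝ (Fin n))) =>
      H p.1.1 p.1.2 p.2) ?_
    have hc : Continuous fun p : (EuclideanSpace ℝ (Fin n) ×
      EuclideanSpace ℝ (Fin n)) × (ℝ × (EuclideanSpace ℝ (Fin n) × EuclideanSpace ℝ (Fin n))) =>
      D2 F (ρ • ((n : ℝ) • (p.2.2.1 + p.2.2.2))) (p.1.1 + p.2.1 • p.1.2) := by
      unfold D2; fun_prop
    exact hc.enorm.measurable.pow_const q
  have hm2 : ∀ u, Measurable fun p : EuclideanSpace ℝ (Fin n) ×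
      (ℝ × (EuclideanSpace ℝ (Fin n) × EuclideanSpace ℝ (Fin n))) => H p.1 u p.2 := fun u => by
    have hc : Continuous fun p : EuclideanSpace ℝ (Fin n) ×
      (ℝ × (EuclideanSpace ℝ (Fin n) × EuclideanSpace ℝ (Fin n))) =>
      D2 F (ρ • ((n : ℝ) • (p.2.2.1 + p.2.2.2))) (p.1 + p.2.1 • u) := by
      unfold D2; fun_prop
    exact hc.enorm.measurable.pow_const q
  refine step1.trans ?_
  rw [lintegral_const_mul' _ _ (by
    refine ENNReal.mul_ne_top (ENNReal.mul_ne_top h64 ?_) ?_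
    · exact ENNReal.inv_ne_top.2 (by have := Real.rpow_pos_of_pos hρ q; simpa using this)
    · exact ENNReal.inv_ne_top.2 hV0)]
  rw [lintegral_lintegral_swap hm1.aemeasurable]
  have step2 : ∫⁻ u in nb N ρ, ∫⁻ x in nb N (1 - 1 / (2 * n)), ∫⁻ t, H x u t ∂(PiM N) ≤
      ∫⁻ u in nb N ρ, ∫⁻ t, QF N q F (ρ • ((n : ℝ) • (t.2.1 + t.2.2))) ∂(PiM N) := by
    refine setLIntegral_mono' (nb_meas hN _) fun u hu => ?_
    replace hu : N u ≤ ρ := hu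
    rw [lintegral_lintegral_swap (hm2 u).aemeasurable]
    refine lintegral_mono_ae ?_
    filter_upwards [PiM_supp hN] with t ht
    refine (shift_le (nb_meas hN _) (nb_meas hN (1 - 1 / (4 * n))) (-(t.1 • u)) (fun z hz => ?_) _).trans ?_
    · rw [mem_nb] at hz ⊢
      rw [sub_neg_eq_add]
      refine (hN.2.2 _ _).trans ?_
      rw [n_smul hN ht.1.1]
      have h1 : t.1 * N u ≤ 1 * ρ := mul_le_mul ht.1.2 hu (n_nonneg hN u) zero_le_one
      have h2 : 1 / (2 * (n : ℝ)) = 1 / (4 * n) + 1 / (4 * n) := by field_simp; norm_num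
      linarith
    · rw [QF]
      refine le_of_eq (lintegral_congr fun z => ?_)
      simp only [hH, neg_add_cancel_right]
  calc _ ≤ 64 ^ q * (ENNReal.ofReal (ρ ^ q))⁻¹ * (volume (nb N ρ))⁻¹ * _ := mul_le_mul_right step2 _
    _ = _ := by
      rw [setLIntegral_const, mul_comm _ (volume (nb N ρ)), ← mul_assoc, mul_assoc _ _ (volume (nb N ρ)),
        ENNReal.inv_mul_cancel hV0 hV1, mul_one, div_eq_mul_inv]; ring

end LVD

namespace LVD

variable {n : ℕ} {N : EuclideanSpace ℝ (Fin n) → ℝ}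
variable {Y : Type*} [NormedAddCommGroup Y] [NormedSpace ℝ Y]

lemma lint_scale {a : ℝ} (ha : 0 < a) (c d : ℝ) (g : ℝ → ℝ≥0∞) :
    ∫⁻ x in Ioc (a * c) (a * d), g x = ENNReal.ofReal a * ∫⁻ x in Ioc c d, g (a * x) := by
  have h1 : ∀ h : ℝ → ℝ≥0∞, ∫⁻ x, h x = ENNReal.ofReal a * ∫⁻ x, h (a * x) := fun h => by
    conv_lhs => rw [← Real.smul_map_volume_mul_left ha.ne']
    rw [lintegral_smul_measure, abs_of_pos ha, smul_eq_mul]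
    congr 1
    exact (Homeomorph.mulLeft₀ a ha.ne').measurableEmbedding.lintegral_map h
  rw [← lintegral_indicator measurableSet_Ioc, ← lintegral_indicator measurableSet_Ioc, h1]
  congr 1
  refine lintegral_congr fun x => ?_
  simp only [indicator, mem_Ioc, mul_lt_mul_iff_right₀ ha, mul_le_mul_iff_right₀ ha]

lemma Ioc_dyadic {T : ℝ} (hT : 0 < T) :
    Ioc 0 T ⊆ ⋃ k : ℕ, Ioc ((1 / 2 : ℝ) ^ k * (T / 2)) ((1 / 2 : ℝ) ^ k * T) := by
  intro ρ hρ
  obtain ⟨k, hk1, hk2⟩ := exists_nat_pow_near_of_lt_one (x := ρ / T) (y := 1 / 2) (by have := hρ.1; positivity)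
    ((div_le_one hT).2 hρ.2) (by norm_num) (by norm_num)
  refine mem_iUnion.2 ⟨k, ?_, ?_⟩
  · rw [lt_div_iff₀ hT] at hk1
    calc _ = (1 / 2 : ℝ) ^ (k + 1) * T := by rw [pow_succ]; ring
      _ < ρ := hk1
  · rwa [div_le_iff₀ hT] at hk2

lemma inv_int {T : ℝ} (hT : 0 < T) : ∫⁻ σ in Ioc (T / 2) T, (ENNReal.ofReal σ)⁻¹ ≤ 1 := by
  calc ∫⁻ σ in Ioc (T / 2) T, (ENNReal.ofReal σ)⁻¹ ≤ ∫⁻ σ in Ioc (T / 2) T, (ENNReal.ofReal (T / 2))⁻¹ := by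
        refine setLIntegral_mono' measurableSet_Ioc fun σ hσ => ?_
        exact ENNReal.inv_le_inv.2 (ENNReal.ofReal_le_ofReal hσ.1.le)
    _ = 1 := by
        rw [setLIntegral_const, Real.volume_Ioc, show T - T / 2 = T / 2 by ring]
        exact ENNReal.inv_mul_cancel (by simpa using hT) ENNReal.ofReal_ne_top

lemma dyadic [CompleteSpace Y] (hn : 0 < n) (hN : IsNorm N) {q m : ℝ} (hq : 2 ≤ q)
    (hm : MartCotypeBound q Y m) {F : EuclideanSpace ℝ (Fin n) → Y} (hF : Continuous F)
    (hL : ∀ x, N x ≤ 1 → ∀ y, N y ≤ 1 → ‖F x - F y‖ ≤ N (x - y))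
    (w : EuclideanSpace ℝ (Fin n)) (hw : N w ≤ 2 * n) :
    ∫⁻ ρ in Ioc 0 (1 / (32 * (n : ℝ) ^ 2)),
      QF N q F (ρ • w) / ENNReal.ofReal (ρ ^ q) / ENNReal.ofReal ρ ≤
      ENNReal.ofReal m ^ q * ENNReal.ofReal (2 * N w) ^ q * volume (nb N 1) := by
  have hn' : (0 : ℝ) < n := by exact_mod_cast hn
  have hq0 : 0 ≤ q := by linarith
  have hw0 := n_nonneg hN w
  set T : ℝ := 1 / (32 * (n : ℝ) ^ 2) with hT
  have hT0 : 0 < T := by positivity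
  set g : ℝ → ℝ≥0∞ := fun ρ => QF N q F (ρ • w) / ENNReal.ofReal (ρ ^ q) / ENNReal.ofReal ρ with hg
  have hQm : Measurable fun ρ : ℝ => QF N q F (ρ • w) := (QF_meas hF).comp (by fun_prop)
  have hgm : Measurable g := by
    refine (hQm.div ?_).div ENNReal.measurable_ofReal
    exact ENNReal.measurable_ofReal.comp (by fun_prop)
  have h2k : ∀ k : ℕ, ENNReal.ofReal ((1 / 2 : ℝ) ^ k) = ((2 : ℝ≥0∞) ^ k)⁻¹ := fun k => by
    rw [one_div, inv_pow, ENNReal.ofReal_inv_of_pos (by positivity), ENNReal.ofReal_pow (by norm_num)]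
    simp
  have term : ∀ k : ℕ, ∀ σ ∈ Ioc (T / 2) T, ENNReal.ofReal ((1 / 2 : ℝ) ^ k) * g ((1 / 2 : ℝ) ^ k * σ) =
      (((2 : ℝ≥0∞) ^ k) ^ q * QF N q F ((1 / 2 : ℝ) ^ k • (σ • w))) *
        ((ENNReal.ofReal (σ ^ q))⁻¹ * (ENNReal.ofReal σ)⁻¹) := by
    intro k σ hσ
    have hσ0 : 0 < σ := by have := hσ.1; linarith
    have ha : (2 : ℝ≥0∞) ^ k ≠ 0 := by simp
    have hb : (2 : ℝ≥0∞) ^ k ≠ ∞ := by finiteness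
    have hq1 : ((2 : ℝ≥0∞) ^ k) ^ q ≠ 0 := by simp [ENNReal.rpow_eq_zero_iff, ha, hb]
    have hq2 : ((2 : ℝ≥0∞) ^ k) ^ q ≠ ∞ := ENNReal.rpow_ne_top_of_nonneg hq0 hb
    simp only [hg]
    rw [Real.mul_rpow (by positivity) hσ0.le, ENNReal.ofReal_mul (by positivity),
      ENNReal.ofReal_mul (by positivity), ← ENNReal.ofReal_rpow_of_nonneg (by positivity) hq0, h2k,
      ENNReal.inv_rpow, div_eq_mul_inv, div_eq_mul_inv,
      ENNReal.mul_inv (Or.inl (by simpa using hq2)) (Or.inl (by simpa using hq1)),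
      ENNReal.mul_inv (Or.inl (by simpa using hb)) (Or.inl (by simp)),
      inv_inv, inv_inv, mul_smul]
    calc _ = (((2 : ℝ≥0∞) ^ k)⁻¹ * (2 : ℝ≥0∞) ^ k) * ((((2 : ℝ≥0∞) ^ k) ^ q *
          QF N q F ((1 / 2 : ℝ) ^ k • (σ • w))) *
        ((ENNReal.ofReal (σ ^ q))⁻¹ * (ENNReal.ofReal σ)⁻¹)) := by ring
      _ = _ := by rw [ENNReal.inv_mul_cancel ha hb, one_mul]
  calc ∫⁻ ρ in Ioc 0 T, g ρ ≤ ∫⁻ ρ in ⋃ k : ℕ, Ioc ((1 / 2 : ℝ) ^ k * (T / 2)) ((1 / 2 : ℝ) ^ k * T), g ρ :=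
        lintegral_mono_set (Ioc_dyadic hT0)
    _ ≤ ∑' k : ℕ, ∫⁻ ρ in Ioc ((1 / 2 : ℝ) ^ k * (T / 2)) ((1 / 2 : ℝ) ^ k * T), g ρ :=
        lintegral_iUnion_le _ _
    _ = ∑' k : ℕ, ∫⁻ σ in Ioc (T / 2) T, ENNReal.ofReal ((1 / 2 : ℝ) ^ k) * g ((1 / 2 : ℝ) ^ k * σ) := by
        refine tsum_congr fun k => ?_
        rw [lint_scale (by positivity), lintegral_const_mul' _ _ ENNReal.ofReal_ne_top]
    _ = ∫⁻ σ in Ioc (T / 2) T, ∑' k : ℕ, ENNReal.ofReal ((1 / 2 : ℝ) ^ k) * g ((1 / 2 : ℝ) ^ k * σ) := by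
        rw [lintegral_tsum]
        intro k
        exact ((hgm.comp (by fun_prop)).const_mul _).aemeasurable
    _ ≤ ∫⁻ σ in Ioc (T / 2) T, (ENNReal.ofReal m ^ q * ENNReal.ofReal (2 * N w) ^ q * volume (nb N 1)) *
          (ENNReal.ofReal σ)⁻¹ := by
        refine setLIntegral_mono' measurableSet_Ioc fun σ hσ => ?_
        have hσ0 : 0 < σ := by have := hσ.1; linarith
        rw [tsum_congr fun k => term k σ hσ, ENNReal.tsum_mul_right]
        have hv : N (σ • w) ≤ 1 / (16 * n) := by
          rw [n_smul hN hσ0.le]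
          calc σ * N w ≤ T * (2 * n) := mul_le_mul hσ.2 hw hw0 hT0.le
            _ = 1 / (16 * n) := by rw [hT]; field_simp; norm_num
        have hs := sum_Q hn hN hq hm hF hL (σ • w) hv
        have h0 : ENNReal.ofReal (σ ^ q) ≠ 0 := by
          have := Real.rpow_pos_of_pos hσ0 q; simpa using this
        calc _ ≤ _ := mul_le_mul_left hs _
          _ = (ENNReal.ofReal m ^ q * ENNReal.ofReal (2 * N w) ^ q * volume (nb N 1)) *
              (ENNReal.ofReal (σ ^ q) * (ENNReal.ofReal (σ ^ q))⁻¹) * (ENNReal.ofReal σ)⁻¹ := by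
            rw [n_smul hN hσ0.le, show 2 * (σ * N w) = (2 * N w) * σ by ring,
              ENNReal.ofReal_mul (by positivity), ENNReal.mul_rpow_of_nonneg _ _ hq0,
              ENNReal.ofReal_rpow_of_pos hσ0]
            ring
          _ = _ := by rw [ENNReal.mul_inv_cancel h0 ENNReal.ofReal_ne_top, mul_one]
    _ ≤ _ := by
        rw [lintegral_const_mul _ (by fun_prop)]
        exact mul_le_of_le_one_right' (inv_int hT0)

/-- small scales -/
lemma small_scales [CompleteSpace Y] (hn : 0 < n) (hN : IsNorm N) {q m : ℝ} (hq : 2 ≤ q)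
    (hm : MartCotypeBound q Y m) {f F : EuclideanSpace ℝ (Fin n) → Y}
    (hfF : ∀ x, N x ≤ 1 → f x = F x) (hF : Continuous F)
    (hL : ∀ x, N x ≤ 1 → ∀ y, N y ≤ 1 → ‖F x - F y‖ ≤ N (x - y)) :
    ∫⁻ ρ in Ioc 0 (1 / (32 * (n : ℝ) ^ 2)), Inn N q f ρ / ENNReal.ofReal ρ ≤
      64 ^ q * (ENNReal.ofReal m ^ q * ENNReal.ofReal (4 * n) ^ q * volume (nb N 1)) := by
  have hn' : (0 : ℝ) < n := by exact_mod_cast hn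
  have hq0 : 0 ≤ q := by linarith
  have := PiM_prob hN
  have h64 : (64 : ℝ≥0∞) ^ q ≠ ∞ := ENNReal.rpow_ne_top_of_nonneg hq0 (by norm_num)
  have hmeas : Measurable fun p : ℝ × (ℝ × (EuclideanSpace ℝ (Fin n) × EuclideanSpace ℝ (Fin n))) =>
      QF N q F (p.1 • ((n : ℝ) • (p.2.2.1 + p.2.2.2))) / ENNReal.ofReal (p.1 ^ q) / ENNReal.ofReal p.1 := by
    refine (((QF_meas hF).comp (by fun_prop)).div ?_).div (ENNReal.measurable_ofReal.comp measurable_fst)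
    exact ENNReal.measurable_ofReal.comp (by fun_prop)
  calc ∫⁻ ρ in Ioc 0 (1 / (32 * (n : ℝ) ^ 2)), Inn N q f ρ / ENNReal.ofReal ρ
      ≤ ∫⁻ ρ in Ioc 0 (1 / (32 * (n : ℝ) ^ 2)), 64 ^ q * ∫⁻ t, QF N q F (ρ • ((n : ℝ) • (t.2.1 + t.2.2))) /
          ENNReal.ofReal (ρ ^ q) / ENNReal.ofReal ρ ∂(PiM N) := by
        refine setLIntegral_mono' measurableSet_Ioc fun ρ hρ => ?_
        have h0 : ENNReal.ofReal (ρ ^ q) ≠ 0 := by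
          have := Real.rpow_pos_of_pos hρ.1 q; simpa using this
        have h1 : ENNReal.ofReal ρ ≠ 0 := by simpa using hρ.1
        simp only [div_eq_mul_inv]
        rw [lintegral_mul_const' _ _ (by simpa using hρ.1), lintegral_mul_const' _ _ (ENNReal.inv_ne_top.2 h0),
          ← mul_assoc]
        have := Inn_bound hn hN hq hfF hF hL hρ.1 hρ.2
        rw [div_eq_mul_inv] at this
        gcongr
    _ = 64 ^ q * ∫⁻ t, (∫⁻ ρ in Ioc 0 (1 / (32 * (n : ℝ) ^ 2)), QF N q F (ρ • ((n : ℝ) • (t.2.1 + t.2.2))) /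
          ENNReal.ofReal (ρ ^ q) / ENNReal.ofReal ρ) ∂(PiM N) := by
        rw [lintegral_const_mul' _ _ h64, lintegral_lintegral_swap hmeas.aemeasurable]
    _ ≤ 64 ^ q * ∫⁻ t, ENNReal.ofReal m ^ q * ENNReal.ofReal (4 * n) ^ q * volume (nb N 1) ∂(PiM N) := by
        refine mul_le_mul_right (lintegral_mono_ae ?_) _
        filter_upwards [PiM_supp hN] with t ht
        have hw : N ((n : ℝ) • (t.2.1 + t.2.2)) ≤ 2 * n := by
          rw [n_smul hN hn'.le]; nlinarith [ht.2]
        refine (dyadic hn hN hq hm hF hL _ hw).trans ?_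
        have : 2 * N ((n : ℝ) • (t.2.1 + t.2.2)) ≤ 4 * n := by linarith
        gcongr
    _ = _ := by rw [lintegral_const, measure_univ, mul_one]

end LVD

namespace LVD

variable {n : ℕ} {N : EuclideanSpace ℝ (Fin n) → ℝ}
variable {Y : Type*} [NormedAddCommGroup Y] [NormedSpace ℝ Y]

lemma exists_ext (hN : IsNorm N) {f : EuclideanSpace ℝ (Fin n) → Y}
    (hL : ∀ x, N x ≤ 1 → ∀ y, N y ≤ 1 → ‖f x - f y‖ ≤ N (x - y)) :
    ∃ F : EuclideanSpace ℝ (Fin n) → Y, Continuous F ∧ ∀ x, N x ≤ 1 → f x = F x := by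
  obtain ⟨C, hC, hup⟩ := n_upper hN
  have hfc : ContinuousOn f (nb N 1) := by
    refine LipschitzOnWith.continuousOn (K := ⟨C, hC.le⟩) (LipschitzOnWith.of_dist_le_mul ?_)
    intro x hx y hy
    rw [dist_eq_norm, dist_eq_norm]
    exact (hL x hx y hy).trans (hup _)
  have hNc := n_cont hN
  have hpos : ∀ x, 0 < max 1 (N x) := fun x => lt_max_of_lt_left one_pos
  refine ⟨fun x => f ((max 1 (N x))⁻¹ • x), ?_, fun x hx => ?_⟩
  · refine hfc.comp_continuous (f := fun x => (max 1 (N x))⁻¹ • x) ?_ fun x => ?_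
    · exact ((continuous_const.max hNc).inv₀ fun x => (hpos x).ne').smul continuous_id
    · rw [mem_nb, n_smul hN (inv_nonneg.2 (hpos x).le), inv_mul_le_iff₀ (hpos x), mul_one]
      exact le_max_right _ _
  · simp [max_eq_left hx]

lemma Inn_sub [Subsingleton Y] (hN : IsNorm N) {q : ℝ} (hq : 2 ≤ q)
    (f : EuclideanSpace ℝ (Fin n) → Y) (ρ : ℝ) : Inn N q f ρ = 0 := by
  rw [← nonpos_iff_eq_zero, Inn]
  refine (lintegral_mono (g := fun _ => 0) fun x => ?_).trans (by simp)
  refine (iInf₂_le (AffineMap.const ℝ _ 0) ?_).trans ?_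
  · intro u v; simp; exact n_nonneg hN _
  · have : ∀ y, (‖f y - (AffineMap.const ℝ (EuclideanSpace ℝ (Fin n)) (0 : Y)) y‖₊ : ℝ≥0∞) ^ q = 0 := fun y => by
      rw [Subsingleton.elim (f y - _) 0]; simp; linarith
    simp only [this]; simp

lemma main_bound [CompleteSpace Y] (hn : 0 < n) (hN : IsNorm N) {q m : ℝ} (hq : 2 ≤ q) (hm0 : 0 ≤ m)
    (hm : MartCotypeBound q Y m) {f : EuclideanSpace ℝ (Fin n) → Y}
    (hL : ∀ x, N x ≤ 1 → ∀ y, N y ≤ 1 → ‖f x - f y‖ ≤ N (x - y)) {r T : ℝ} (hr : 0 < r)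
    (hT : T ≤ 1 / (2 * n)) :
    ∫⁻ ρ in Icc r T, Inn N q f ρ / volume (nb N (1 - 1 / (2 * n))) / ENNReal.ofReal ρ ≤
      ENNReal.ofReal (2 * (256 * m * n) ^ q + 16 * n) := by
  have hn' : (0 : ℝ) < n := by exact_mod_cast hn
  have hn1 : (1 : ℝ) ≤ n := by exact_mod_cast hn
  have hq0 : 0 ≤ q := by linarith
  obtain ⟨F, hF, hfF⟩ := exists_ext hN hL
  have hLF : ∀ x, N x ≤ 1 → ∀ y, N y ≤ 1 → ‖F x - F y‖ ≤ N (x - y) := fun x hx y hy => by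
    rw [← hfF x hx, ← hfF y hy]; exact hL x hx y hy
  have hB : 0 < 1 - 1 / (2 * (n : ℝ)) := by
    have : 1 / (2 * (n : ℝ)) ≤ 1 / 2 := by
      apply one_div_le_one_div_of_le (by norm_num); linarith
    linarith
  set v := volume (nb N (1 - 1 / (2 * n))) with hv
  have hv0 : v ≠ 0 := nb_pos hN hB
  have hv1 : v ≠ ∞ := nb_fin hN _
  set T' : ℝ := 1 / (32 * (n : ℝ) ^ 2) with hT'
  have hT0 : 0 < T' := by positivity
  have hsub : Icc r T ⊆ Ioc 0 T' ∪ Icc T' T := fun ρ hρ => by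
    rcases le_total ρ T' with h | h
    · exact Or.inl ⟨lt_of_lt_of_le hr hρ.1, h⟩
    · exact Or.inr ⟨h, hρ.2⟩
  have p1 : ∫⁻ ρ in Ioc 0 T', Inn N q f ρ / v / ENNReal.ofReal ρ ≤ ENNReal.ofReal (2 * (256 * m * n) ^ q) := by
    have e : ∀ ρ, Inn N q f ρ / v / ENNReal.ofReal ρ = v⁻¹ * (Inn N q f ρ / ENNReal.ofReal ρ) := fun ρ => by
      simp only [div_eq_mul_inv]; ring
    simp only [e]
    rw [lintegral_const_mul' _ _ (ENNReal.inv_ne_top.2 hv0)]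
    calc _ ≤ v⁻¹ * (64 ^ q * (ENNReal.ofReal m ^ q * ENNReal.ofReal (4 * n) ^ q * (2 * v))) := by
          refine mul_le_mul_right ((small_scales hn hN hq hm hfF hF hLF).trans ?_) _
          gcongr
          exact nb_half hn hN
      _ = (v⁻¹ * v) * (2 * (64 ^ q * (ENNReal.ofReal m ^ q * ENNReal.ofReal (4 * n) ^ q))) := by ring
      _ = _ := by
          rw [ENNReal.inv_mul_cancel hv0 hv1, one_mul,
            ENNReal.ofReal_mul (p := 2) (q := (256 * m * n) ^ q) (by norm_num),
            ← ENNReal.mul_rpow_of_nonneg _ _ hq0, ← ENNReal.mul_rpow_of_nonneg _ _ hq0,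
            ← ENNReal.ofReal_mul hm0, ← ENNReal.ofReal_rpow_of_nonneg (by positivity) hq0,
            show (64 : ℝ≥0∞) = ENNReal.ofReal 64 by simp, ← ENNReal.ofReal_mul (by norm_num)]
          simp only [ENNReal.ofReal_ofNat]
          congr 3; ring
  have p2 : ∫⁻ ρ in Icc T' T, Inn N q f ρ / v / ENNReal.ofReal ρ ≤ ENNReal.ofReal (16 * n) := by
    calc _ ≤ ∫⁻ ρ in Icc T' T, (ENNReal.ofReal T')⁻¹ := by
          refine setLIntegral_mono' measurableSet_Icc fun ρ hρ => ?_
          rw [div_eq_mul_inv]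
          have h1 : Inn N q f ρ / v ≤ 1 :=
            ENNReal.div_le_of_le_mul (by
              rw [one_mul]; exact Inn_triv hn hN hq hL (lt_of_lt_of_le hT0 hρ.1) (hρ.2.trans hT))
          calc _ ≤ 1 * (ENNReal.ofReal T')⁻¹ := by
                refine mul_le_mul' h1 (ENNReal.inv_le_inv.2 (ENNReal.ofReal_le_ofReal hρ.1))
            _ = _ := one_mul _
      _ = ENNReal.ofReal (T'⁻¹ * (T - T')) := by
          rw [setLIntegral_const, Real.volume_Icc, ← ENNReal.ofReal_inv_of_pos hT0,
            ← ENNReal.ofReal_mul (by positivity)]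
      _ ≤ _ := by
          apply ENNReal.ofReal_le_ofReal
          rw [inv_mul_le_iff₀ hT0]
          have : T' * (16 * n) = 1 / (2 * n) := by rw [hT']; field_simp; norm_num
          rw [this]; linarith
  calc _ ≤ _ := lintegral_mono_set hsub
    _ ≤ _ := lintegral_union_le _ _ _
    _ ≤ _ := add_le_add p1 p2
    _ = _ := (ENNReal.ofReal_add (by positivity) (by positivity)).symm

lemma plog_lower (hn : 0 < n) : 1 / 2 ≤ plog n := by
  unfold plog
  split_ifs with h
  · norm_num
  · have h2 : (2 : ℝ) ≤ n := by exact_mod_cast (by omega : 2 ≤ n)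
    have := Real.log_le_log (by norm_num) h2
    linarith [Real.log_two_gt_d9]

lemma T_bound (hn : 0 < n) {I : ℝ} (hI : 1 / 16 ≤ I) :
    0 < 1 / 12 / ((n : ℝ) ^ ((5 : ℝ) / 4) * Real.sqrt (I * plog n)) ∧
    1 / 12 / ((n : ℝ) ^ ((5 : ℝ) / 4) * Real.sqrt (I * plog n)) ≤ 1 / (2 * n) := by
  have hn' : (0 : ℝ) < n := by exact_mod_cast hn
  have hn1 : (1 : ℝ) ≤ n := by exact_mod_cast hn
  have hp := plog_lower hn
  have h1 : 1 / 6 ≤ Real.sqrt (I * plog n) := by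
    apply Real.le_sqrt_of_sq_le; nlinarith
  have h2 : (n : ℝ) ≤ (n : ℝ) ^ ((5 : ℝ) / 4) := by
    conv_lhs => rw [← Real.rpow_one (n : ℝ)]
    exact Real.rpow_le_rpow_of_exponent_le hn1 (by norm_num)
  have h3 : (n : ℝ) * (1 / 6) ≤ (n : ℝ) ^ ((5 : ℝ) / 4) * Real.sqrt (I * plog n) := by gcongr
  refine ⟨by positivity, ?_⟩
  calc _ ≤ 1 / 12 / ((n : ℝ) * (1 / 6)) := by gcongr
    _ = 1 / (2 * n) := by field_simp; norm_num

lemma K_bound (hn : 0 < n) {I m q : ℝ} (hI : 1 / 16 ≤ I) (hm : 1 ≤ m) (hq : 2 ≤ q) :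
    2 * (256 * m * n) ^ q + 16 * n ≤
      (9 * (1024 * (n : ℝ) ^ ((1 : ℝ) / 4) * m * Real.sqrt I) * n) ^ q / 2 := by
  have hn1 : (1 : ℝ) ≤ n := by exact_mod_cast hn
  have h1 : 1 / 4 ≤ Real.sqrt I := by apply Real.le_sqrt_of_sq_le; linarith
  have h2 : (1 : ℝ) ≤ (n : ℝ) ^ ((1 : ℝ) / 4) := Real.one_le_rpow hn1 (by norm_num)
  set b : ℝ := 256 * m * n with hb
  have hmn : (n : ℝ) ≤ m * n := by nlinarith
  have hb1 : 1 ≤ b := by rw [hb]; nlinarith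
  have hb2 : b ≤ b ^ q := by
    conv_lhs => rw [← Real.rpow_one b]
    exact Real.rpow_le_rpow_of_exponent_le hb1 (by linarith)
  have h3 : 9 * b ≤ 9 * (1024 * (n : ℝ) ^ ((1 : ℝ) / 4) * m * Real.sqrt I) * n := by
    calc 9 * b = 9 * (1024 * 1 * m * (1 / 4)) * n := by rw [hb]; ring
      _ ≤ _ := by gcongr
  have h4 : (9 * b) ^ q ≤ (9 * (1024 * (n : ℝ) ^ ((1 : ℝ) / 4) * m * Real.sqrt I) * n) ^ q :=
    Real.rpow_le_rpow (by positivity) h3 (by linarith)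
  rw [Real.mul_rpow (by norm_num) (by positivity)] at h4
  have h5 : (81 : ℝ) ≤ 9 ^ q := by
    calc (81 : ℝ) = 9 ^ (2 : ℝ) := by norm_num
      _ ≤ _ := Real.rpow_le_rpow_of_exponent_le (by norm_num) hq
  have h6 : 81 * b ^ q ≤ 9 ^ q * b ^ q := by gcongr
  have h7 : 16 * (n : ℝ) ≤ b := by rw [hb]; nlinarith
  linarith

end LVD

/-- **Theorem (local vector-valued Dorronsoro estimate).** -/
theorem statement4 :
    ∃ c κ : ℝ, 0 < c ∧ c < 1 / 4 ∧ 2 ≤ κ ∧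
      ∀ (q : ℝ), 2 ≤ q → ∀ (n : ℕ), 0 < n →
      ∀ (N : EuclideanSpace ℝ (Fin n) → ℝ), IsNorm N →
      ∀ (Y : Type u) [NormedAddCommGroup Y] [NormedSpace ℝ Y] [CompleteSpace Y],
      ∀ m : ℝ, 0 ≤ m → MartCotypeBound q Y m →
      ∀ K T : ℝ,
        K = κ * (n : ℝ) ^ ((1 : ℝ) / 4) * m * Real.sqrt (IqX q N * MX N) →
        T = c / ((n : ℝ) ^ ((5 : ℝ) / 4) * Real.sqrt (IqX q N * MX N * plog n)) →
        T ≤ 1 / (2 * n) ∧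
        ∀ f : EuclideanSpace ℝ (Fin n) → Y,
          (∀ x, N x ≤ 1 → ∀ y, N y ≤ 1 → ‖f x - f y‖ ≤ N (x - y)) →
          ∀ r : ℝ, 0 < r → r ≤ T ^ 2 →
            (∫⁻ ρ in Set.Icc r T,
                (((∫⁻ x in {x : EuclideanSpace ℝ (Fin n) | N x ≤ 1 - 1 / (2 * n)},
                    ⨅ Λ ∈ {Λ : EuclideanSpace ℝ (Fin n) →ᵃ[ℝ] Y |
                        ∀ u v, ‖Λ u - Λ v‖ ≤ 2 * N (u - v)},
                      ((∫⁻ y in {y : EuclideanSpace ℝ (Fin n) | N (y - x) ≤ ρ},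
                          (‖f y - Λ y‖₊ : ℝ≥0∞) ^ q)
                        / volume {y : EuclideanSpace ℝ (Fin n) | N (y - x) ≤ ρ})
                        / ENNReal.ofReal (ρ ^ q))
                  / volume {x : EuclideanSpace ℝ (Fin n) | N x ≤ 1 - 1 / (2 * n)})
                  / ENNReal.ofReal ρ))
              / ENNReal.ofReal (Real.log (T / r))
            ≤ ENNReal.ofReal ((9 * K * n) ^ q / |Real.log r|) := by
  refine ⟨1 / 12, 1024, by norm_num, by norm_num, by norm_num, ?_⟩
  intro q hq n hn N hN Y _ _ _ m hm0 hm K T hK hT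
  have hI := LVD.Iq_M_lower hn hN hq
  have hT1 := LVD.T_bound hn hI
  rw [← hT] at hT1
  obtain ⟨hT0, hT2⟩ := hT1
  refine ⟨hT2, fun f hL r hr hrT => ?_⟩
  have hn1 : (1 : ℝ) ≤ n := by exact_mod_cast hn
  have hT3 : T ≤ 1 / 2 := hT2.trans (by
    apply one_div_le_one_div_of_le (by norm_num); linarith)
  have hlogT : Real.log T < 0 := Real.log_neg hT0 (by linarith)
  have hlogr : Real.log r ≤ 2 * Real.log T := by
    have := Real.log_le_log hr hrT
    rwa [Real.log_pow] at this
  have hlogq : Real.log (T / r) = Real.log T - Real.log r := Real.log_div hT0.ne' hr.ne'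
  have habs : |Real.log r| = - Real.log r := abs_of_neg (by linarith)
  change (∫⁻ ρ in Set.Icc r T, LVD.Inn N q f ρ / volume (LVD.nb N (1 - 1 / (2 * n))) /
    ENNReal.ofReal ρ) / ENNReal.ofReal (Real.log (T / r)) ≤ _
  rcases subsingleton_or_nontrivial Y with hY | hY
  · simp [LVD.Inn_sub hN hq]
  have hm1 := LVD.one_le_m hq hm
  have hmain := LVD.main_bound hn hN hq hm0 hm hL hr hT2
  have hKb := LVD.K_bound hn hI hm1 hq
  rw [← hK] at hKb
  have hA : 0 ≤ (9 * K * n) ^ q := by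
    refine Real.rpow_nonneg ?_ _
    rw [hK]; positivity
  calc _ ≤ ENNReal.ofReal ((9 * K * n) ^ q / 2) / ENNReal.ofReal (Real.log (T / r)) := by
        gcongr
        exact hmain.trans (ENNReal.ofReal_le_ofReal hKb)
    _ = ENNReal.ofReal ((9 * K * n) ^ q / 2 / Real.log (T / r)) :=
        (ENNReal.ofReal_div_of_pos (by linarith)).symm
    _ ≤ _ := by
        apply ENNReal.ofReal_le_ofReal
        rw [div_div]
        gcongr
        · rw [habs]; linarith
        · rw [habs, hlogq]; linarith
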